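/- arXiv:1901.06375 — 2 statements merged into one kernel-verified Lean document; each statement's English description precedes it below -/
import Mathlib

section
/- Let s > 1 be an integer and let w be an integer with |w| ≤ 4 or |w| = 6. Then: (1) if w ≠ 0, the residue class w + sℤ is s-good with good representative w; and (2) for every integer t such that w + st ≠ 0 and −4 < s/(w + st) < 4, the number s/(w + st) is a relation number. -/
/-- `a = [[1,0],[1,1]]` as an element of `SL(2, ℂ)`. -/
def matA : Matrix.SpecialLinearGroup (Fin 2) ℂ :=
  ⟨!![1, 0; 1, 1], by simp [Matrix.det_fin_two_of]⟩

/-- `b_q = [[1,q],[0,1]]` as an element of `SL(2, ℂ)`. -/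
def matB (q : ℂ) : Matrix.SpecialLinearGroup (Fin 2) ℂ :=
  ⟨!![1, q; 0, 1], by simp [Matrix.det_fin_two_of]⟩

/-- `q` is a relation number: the homomorphism `F₂ → SL(2,ℂ)`, `x ↦ a`, `y ↦ b_q`,
is not injective. -/
def IsRelationNumber (q : ℂ) : Prop :=
  ¬ Function.Injective
    (FreeGroup.lift (fun i : Bool => if i then matA else matB q) :
      FreeGroup Bool →* Matrix.SpecialLinearGroup (Fin 2) ℂ)

/-- `q` is an `ℓ`-step relation number: there are `k ≤ ℓ` and nonzero integers
`m_1, …, m_{2k+1}` with `b_q^{m_1} a^{m_2} ⋯ b_q^{m_{2k+1}}` lower triangular. -/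
def IsStepRelationNumber (ℓ : ℕ) (q : ℂ) : Prop :=
  ∃ k : ℕ, k ≤ ℓ ∧ ∃ m : Fin (2 * k + 1) → ℤ, (∀ i, m i ≠ 0) ∧
    ((List.ofFn (fun i : Fin (2 * k + 1) =>
      (if (i : ℕ) % 2 = 0 then matB q else matA) ^ (m i))).prod).val 0 1 = 0

/-- The residue class `w + smℤ` is `s`-good with good representative `w`. -/
def IsGoodRep (s w m : ℤ) : Prop :=
  ∃ y : ℤ, y * (Int.gcd w (s * m) : ℤ) ∣ m * (Int.gcd w s : ℤ) ∧
    (w ∣ s * m * y + (Int.gcd w (s * m) : ℤ) ∨ w ∣ s * m * y - (Int.gcd w (s * m) : ℤ))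

/-- exponent-list action on the second basis vector -/
def vecq {R : Type*} [CommRing R] (q : R) : List (ℤ × ℤ) → R × R
  | [] => (0, 1)
  | (p :: l) =>
      ((vecq q l).1 + (p.1 : R) * q * ((vecq q l).2 + (p.2 : R) * (vecq q l).1),
        (vecq q l).2 + (p.2 : R) * (vecq q l).1)

/-- the word of an exponent list -/
def wd : List (ℤ × ℤ) → FreeGroup Bool
  | [] => 1
  | (p :: l) => FreeGroup.of false ^ p.1 * (FreeGroup.of true ^ p.2 * wd l)

/-- existence of a witness word -/
def Wit (q : ℂ) : Prop :=
  ∃ l : List (ℤ × ℤ), l ≠ [] ∧ (∀ p ∈ l, p.1 ≠ 0 ∧ p.2 ≠ 0) ∧ (vecq q l).1 = 0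

theorem matA_zpow (n : ℤ) : ((matA ^ n : Matrix.SpecialLinearGroup (Fin 2) ℂ) : Matrix (Fin 2) (Fin 2) ℂ)
    = !![1, 0; (n : ℂ), 1] := by
  induction n using Int.induction_on with
  | zero => simp [Matrix.one_fin_two]
  | succ n ih =>
    rw [zpow_add_one, Matrix.SpecialLinearGroup.coe_mul, ih]
    simp [matA, Matrix.mul_fin_two]
  | pred n ih =>
    rw [zpow_sub_one, Matrix.SpecialLinearGroup.coe_mul, ih, Matrix.SpecialLinearGroup.coe_inv]
    simp [matA, Matrix.mul_fin_two, Matrix.adjugate_fin_two_of]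
    ring

theorem matB_zpow (q : ℂ) (n : ℤ) : ((matB q ^ n : Matrix.SpecialLinearGroup (Fin 2) ℂ) : Matrix (Fin 2) (Fin 2) ℂ)
    = !![1, (n : ℂ) * q; 0, 1] := by
  induction n using Int.induction_on with
  | zero => simp [Matrix.one_fin_two]
  | succ n ih =>
    rw [zpow_add_one, Matrix.SpecialLinearGroup.coe_mul, ih]
    simp [matB, Matrix.mul_fin_two]
    ring
  | pred n ih =>
    rw [zpow_sub_one, Matrix.SpecialLinearGroup.coe_mul, ih, Matrix.SpecialLinearGroup.coe_inv]
    simp [matB, Matrix.mul_fin_two, Matrix.adjugate_fin_two_of]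
    ring

/-- the representation -/
def rep (q : ℂ) : FreeGroup Bool →* Matrix.SpecialLinearGroup (Fin 2) ℂ :=
  FreeGroup.lift (fun i : Bool => if i then matA else matB q)

theorem rep_wd (q : ℂ) (l : List (ℤ × ℤ)) :
    (rep q (wd l)).val 0 1 = (vecq q l).1 ∧ (rep q (wd l)).val 1 1 = (vecq q l).2 := by
  induction l with
  | nil => simp [wd, vecq]
  | cons p l ih =>
    obtain ⟨h1, h2⟩ := ih
    have e : (rep q (wd (p :: l))).val =
        !![1, (p.1 : ℂ) * q; 0, 1] * (!![1, 0; (p.2 : ℂ), 1] * (rep q (wd l)).val) := by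
      rw [← matA_zpow, ← matB_zpow]
      simp [wd, rep]
    rw [e]
    generalize (rep q (wd l)).val = M at h1 h2
    rw [Matrix.eta_fin_two M, Matrix.mul_fin_two, Matrix.mul_fin_two, h1, h2]
    simp only [vecq]
    constructor
    · simp only [Matrix.of_apply, Matrix.cons_val', Matrix.cons_val_zero, Matrix.cons_val_one, Matrix.cons_val_fin_one]; ring
    · simp; ring

theorem conj_comm_iff (g : Matrix.SpecialLinearGroup (Fin 2) ℂ) :
    matA * (g * matA * g⁻¹) = (g * matA * g⁻¹) * matA ↔ g.val 0 1 = 0 := by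
  have hdet := g.det_coe
  rw [Matrix.det_fin_two] at hdet
  have hA : matA.val = !![1, 0; 1, 1] := rfl
  have e : (g * matA * g⁻¹).val =
      !![1 + g.val 0 1 * g.val 1 1, -(g.val 0 1)^2; (g.val 1 1)^2, 1 - g.val 0 1 * g.val 1 1] := by
    rw [Matrix.SpecialLinearGroup.coe_mul, Matrix.SpecialLinearGroup.coe_mul,
      Matrix.SpecialLinearGroup.coe_inv, hA, Matrix.adjugate_fin_two]
    ext i j
    fin_cases i <;> fin_cases j <;>
      simp [Matrix.mul_apply, Fin.sum_univ_two]
    · linear_combination hdet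
    · ring
    · ring
    · linear_combination hdet
  constructor
  · intro h
    have h' := congrArg (fun z => z.val 0 0) h
    simp only [Matrix.SpecialLinearGroup.coe_mul matA, Matrix.SpecialLinearGroup.coe_mul _ matA] at h'
    rw [e, hA] at h'
    simpa [Matrix.mul_apply, Fin.sum_univ_two] using h'
  · intro h
    apply Subtype.ext
    rw [Matrix.SpecialLinearGroup.coe_mul matA, Matrix.SpecialLinearGroup.coe_mul _ matA, e, hA, h]
    simp [Matrix.mul_fin_two]
    ring

theorem vec4_cast (l : List (ℤ × ℤ)) :
    (vecq (4 : ℂ) l).1 = ((vecq (4 : ℤ) l).1 : ℂ) ∧ (vecq (4 : ℂ) l).2 = ((vecq (4 : ℤ) l).2 : ℂ) := by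
  induction l with
  | nil => simp [vecq]
  | cons p l ih => simp [vecq, ih.1, ih.2]

theorem step_a (X Y n : ℤ) (hn : n ≠ 0) (h : 2 * |Y| < |X|) : |X| < 2 * |Y + n * X| := by
  have h1 : |n * X| ≤ |Y + n * X| + |Y| := by
    have := abs_sub (Y + n * X) Y
    simpa using this
  have h2 : |X| ≤ |n * X| := by
    rw [abs_mul]
    exact le_mul_of_one_le_left (abs_nonneg _) (Int.one_le_abs hn)
  linarith

theorem step_b (X Y n : ℤ) (hn : n ≠ 0) (h : |X| < 2 * |Y|) : 2 * |Y| < |X + n * 4 * Y| := by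
  have h1 : |n * 4 * Y| ≤ |X + n * 4 * Y| + |X| := by
    have := abs_sub (X + n * 4 * Y) X
    simpa using this
  have h2 : 4 * |Y| ≤ |n * 4 * Y| := by
    rw [abs_mul, abs_mul]
    have := Int.one_le_abs hn
    have h4 : |(4 : ℤ)| = 4 := rfl
    rw [h4]
    nlinarith [abs_nonneg Y]
  linarith

theorem vec4_ping (l : List (ℤ × ℤ)) (hl : ∀ p ∈ l, p.1 ≠ 0 ∧ p.2 ≠ 0) :
    l = [] ∨ 2 * |(vecq (4 : ℤ) l).2| < |(vecq (4 : ℤ) l).1| := by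
  induction l with
  | nil => simp
  | cons p l ih =>
    right
    have hp := hl p (by simp)
    simp only [vecq, Int.cast_id]
    apply step_b _ _ _ hp.1
    rcases ih (fun x hx => hl x (by simp [hx])) with h | h
    · subst h; simp [vecq]
    · exact step_a _ _ _ hp.2 h

theorem rel_of_wit (q : ℂ) (h : Wit q) : IsRelationNumber q := by
  obtain ⟨l, hne, hl, h0⟩ := h
  intro hinj
  change Function.Injective (rep q) at hinj
  have ht : ∀ q, rep q (FreeGroup.of true) = matA := by intro q; simp [rep]
  have hc : FreeGroup.of true * (wd l * FreeGroup.of true * (wd l)⁻¹) =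
      (wd l * FreeGroup.of true * (wd l)⁻¹) * FreeGroup.of true := by
    apply hinj
    simp only [map_mul, map_inv, ht]
    rw [conj_comm_iff, (rep_wd q l).1, h0]
  have h4 := congrArg (rep 4) hc
  simp only [map_mul, map_inv, ht] at h4
  rw [conj_comm_iff, (rep_wd 4 l).1, (vec4_cast l).1] at h4
  have h5 : (vecq (4 : ℤ) l).1 = 0 := by exact_mod_cast h4
  rcases vec4_ping l hl with h | h
  · exact hne h
  · rw [h5] at h
    simp at h
    have := abs_nonneg (vecq (4 : ℤ) l).2
    omega

theorem wit_scale (q q' : ℂ) (n : ℤ) (hn : n ≠ 0) (hq : q = n * q') (h : Wit q) : Wit q' := by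
  obtain ⟨l, hne, hl, h0⟩ := h
  refine ⟨l.map (fun p => (n * p.1, p.2)), by simpa using hne, ?_, ?_⟩
  · intro p hp
    rw [List.mem_map] at hp
    obtain ⟨p', h1, rfl⟩ := hp
    exact ⟨mul_ne_zero hn (hl p' h1).1, (hl p' h1).2⟩
  · have : ∀ l : List (ℤ × ℤ), vecq q' (l.map (fun p => (n * p.1, p.2))) = vecq q l := by
      intro l
      induction l with
      | nil => rfl
      | cons p l ih =>
        simp only [List.map_cons, vecq, ih, hq, Int.cast_mul]
        ext
        · simp only; ring
        · rfl
    rw [this]; exact h0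

theorem wit_neg (q : ℂ) (h : Wit (-q)) : Wit q :=
  wit_scale (-q) q (-1) (by norm_num) (by push_cast; ring) h

theorem wit_1_1 : Wit (1 / 1) :=
  ⟨[(1, -2), (1, 1)], by simp, by simp, by norm_num [vecq]⟩

theorem wit_2_1 : Wit (2 / 1) :=
  ⟨[(1, -1), (1, 1)], by simp, by simp, by norm_num [vecq]⟩

theorem wit_3_1 : Wit (3 / 1) :=
  ⟨[(1, -1), (1, -1), (1, 1)], by simp, by simp, by norm_num [vecq]⟩

theorem wit_1_2 : Wit (1 / 2) :=
  ⟨[(2, -2), (2, 1)], by simp, by simp, by norm_num [vecq]⟩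

theorem wit_3_2 : Wit (3 / 2) :=
  ⟨[(-2, 1), (-1, 1)], by simp, by simp, by norm_num [vecq]⟩

theorem wit_5_2 : Wit (5 / 2) :=
  ⟨[(-2, 1), (-1, 1), (-2, 1)], by simp, by simp, by norm_num [vecq]⟩

theorem wit_7_2 : Wit (7 / 2) :=
  ⟨[(-2, 1), (-1, 1), (-1, 1), (-1, 1), (-2, 1)], by simp, by simp, by norm_num [vecq]⟩

theorem wit_1_3 : Wit (1 / 3) :=
  ⟨[(3, -2), (3, 1)], by simp, by simp, by norm_num [vecq]⟩

theorem wit_2_3 : Wit (2 / 3) :=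
  ⟨[(-3, 1), (-3, 1)], by simp, by simp, by norm_num [vecq]⟩

theorem wit_4_3 : Wit (4 / 3) :=
  ⟨[(-3, 1), (-1, 1)], by simp, by simp, by norm_num [vecq]⟩

theorem wit_5_3 : Wit (5 / 3) :=
  ⟨[(-3, 1), (-1, 3), (-1, 1)], by simp, by simp, by norm_num [vecq]⟩

theorem wit_7_3 : Wit (7 / 3) :=
  ⟨[(-3, 1), (-1, 1), (-3, 1)], by simp, by simp, by norm_num [vecq]⟩

theorem wit_8_3 : Wit (8 / 3) :=
  ⟨[(-1, 1), (-1, 1), (-6, 1)], by simp, by simp, by norm_num [vecq]⟩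

theorem wit_10_3 : Wit (10 / 3) :=
  ⟨[(-3, 1), (-1, 1), (-1, 1), (-1, 3), (-1, 1), (-3, 1)], by simp, by simp, by norm_num [vecq]⟩

theorem wit_11_3 : Wit (11 / 3) :=
  ⟨[(-3, 2), (-1, 1), (-1, 1), (-1, 1), (-1, 1), (-1, 2), (-3, 1)], by simp, by simp, by norm_num [vecq]⟩

theorem wit_1_4 : Wit (1 / 4) :=
  ⟨[(4, -2), (4, 1)], by simp, by simp, by norm_num [vecq]⟩

theorem wit_3_4 : Wit (3 / 4) :=
  ⟨[(-4, 1), (-2, 1)], by simp, by simp, by norm_num [vecq]⟩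

theorem wit_5_4 : Wit (5 / 4) :=
  ⟨[(-4, 1), (-1, 1)], by simp, by simp, by norm_num [vecq]⟩

theorem wit_7_4 : Wit (7 / 4) :=
  ⟨[(-4, 1), (-2, 1), (-1, 1)], by simp, by simp, by norm_num [vecq]⟩

theorem wit_9_4 : Wit (9 / 4) :=
  ⟨[(-4, 1), (-1, 1), (-4, 1)], by simp, by simp, by norm_num [vecq]⟩

theorem wit_11_4 : Wit (11 / 4) :=
  ⟨[(4, -1), (-2, 1), (-1, 1), (-1, 1)], by simp, by simp, by norm_num [vecq]⟩

theorem wit_13_4 : Wit (13 / 4) :=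
  ⟨[(-36, 1), (-1, 1), (-1, 1), (-1, 1)], by simp, by simp, by norm_num [vecq]⟩

theorem wit_15_4 : Wit (15 / 4) :=
  ⟨[(-2, 2), (-3, 1), (-1, 1), (-1, 1), (-1, 1), (-1, 1), (-1, 1), (-3, 2), (-2, 1)], by simp, by simp, by norm_num [vecq]⟩

theorem wit_9_5 : Wit (9 / 5) :=
  ⟨[(-5, -1), (1, -1), (-5, 1)], by simp, by simp, by norm_num [vecq]⟩

theorem wit_11_5 : Wit (11 / 5) :=
  ⟨[(-5, 1), (-1, 1), (-5, 1)], by simp, by simp, by norm_num [vecq]⟩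

theorem wit_1_6 : Wit (1 / 6) :=
  ⟨[(6, -2), (6, 1)], by simp, by simp, by norm_num [vecq]⟩

theorem wit_5_6 : Wit (5 / 6) :=
  ⟨[(6, 1), (-1, 1)], by simp, by simp, by norm_num [vecq]⟩

theorem wit_7_6 : Wit (7 / 6) :=
  ⟨[(-6, 1), (-1, 1)], by simp, by simp, by norm_num [vecq]⟩

theorem wit_11_6 : Wit (11 / 6) :=
  ⟨[(2, -1), (1, -2), (-3, 1)], by simp, by simp, by norm_num [vecq]⟩

theorem wit_13_6 : Wit (13 / 6) :=
  ⟨[(2, -1), (1, -1), (-3, 1)], by simp, by simp, by norm_num [vecq]⟩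

theorem wit_17_6 : Wit (17 / 6) :=
  ⟨[(2, -1), (1, -1), (1, -4), (-1, 1), (-3, 1)], by simp, by simp, by norm_num [vecq]⟩

theorem wit_19_6 : Wit (19 / 6) :=
  ⟨[(-6, 1), (-1, 1), (-1, 1), (-3, 1), (-1, 1), (-1, 1), (-6, 1)], by simp, by simp, by norm_num [vecq]⟩

theorem wit_23_6 : Wit (23 / 6) :=
  ⟨[(2, 27), (1, -1), (1, -1), (1, -2), (3, -2), (1, -9), (-1, 1), (-1, 1), (-1, 1), (-1, 1), (-1, 1), (-1, 1), (-1, 1), (-2, 1)], by simp, by simp, by norm_num [vecq]⟩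

theorem wit_13_7 : Wit (13 / 7) :=
  ⟨[(-7, -1), (1, -1), (-7, 1)], by simp, by simp, by norm_num [vecq]⟩

/-- `w ∣ s t²` -/
theorem wit_W0 (s w t r : ℤ) (hr : r = w + s * t) (hr0 : r ≠ 0) (ht : t ≠ 0)
    (hd : w ∣ s * t ^ 2) : Wit ((s : ℂ) / (r : ℂ)) := by
  have hd2 : w ∣ t * r := by
    rw [hr, show t * (w + s * t) = w * t + s * t ^ 2 by ring]
    exact dvd_add (dvd_mul_right _ _) hd
  obtain ⟨k, hk⟩ := hd2
  have hk0 : k ≠ 0 := by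
    rintro rfl
    simp [ht, hr0] at hk
  have hrc : (r : ℂ) ≠ 0 := by exact_mod_cast hr0
  have e1 : (t : ℂ) * r = w * k := by exact_mod_cast hk
  have e2 : (r : ℂ) = w + s * t := by exact_mod_cast hr
  refine ⟨[(-k, -1), (t, 1)], by simp, by simp [hk0, ht], ?_⟩
  simp [vecq]
  field_simp
  linear_combination (s : ℂ) * e1 - (k : ℂ) * s * e2

theorem wit_W1 (s w t r m : ℤ) (hr : r = w + s * t) (hr0 : r ≠ 0) (ht : t ≠ 0)
    (hm : m ∣ t) (hmt : t ≠ m) (hd : w ∣ t - m) : Wit ((s : ℂ) / (r : ℂ)) := by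
  obtain ⟨k, hk⟩ := hd
  obtain ⟨n, hn⟩ := hm
  have hm0 : m ≠ 0 := by rintro rfl; simp at hn; exact ht hn
  have hn0 : n ≠ 0 := by rintro rfl; simp at hn; exact ht hn
  have hk0 : k ≠ 0 := by
    rintro rfl
    simp at hk; omega
  have hrc : (r : ℂ) ≠ 0 := by exact_mod_cast hr0
  have e1 : (t : ℂ) - m = w * k := by exact_mod_cast hk
  have e2 : (r : ℂ) = w + s * t := by exact_mod_cast hr
  have e3 : (t : ℂ) = m * n := by exact_mod_cast hn
  refine ⟨[(-t, 1), (r * k, -n), (m, 1)], by simp, by simp [hk0, ht, hn0, hm0, hr0], ?_⟩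
  have f1 : (1 : ℂ) + -(n : ℂ) * (m * (s / r)) = w / r := by
    field_simp
    linear_combination e2 + s * e3
  have f2 : (m : ℂ) * (s / r) + r * k * (s / r) * (w / r) = t * (s / r) := by
    field_simp
    linear_combination - (s : ℂ) * e1
  have f3 : (w : ℂ) / r + t * (s / r) = 1 := by
    field_simp
    linear_combination - e2
  simp only [vecq, Int.cast_neg, Int.cast_one, Int.cast_mul, zero_add, mul_zero, add_zero, mul_one]
  rw [f1, f2, one_mul, f3]
  ring

theorem wit_W2 (s w r m e : ℤ) (hr : r = w + s) (hr0 : r ≠ 0) (he : e * e = 1)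
    (hm : r - e = w * m) (hm0 : m ≠ 0) (hm1 : m ≠ -1) : Wit ((s : ℂ) / (r : ℂ)) := by
  have he0 : e ≠ 0 := by rintro rfl; simp at he
  have hm2 : 1 + m ≠ 0 := by omega
  have hrc : (r : ℂ) ≠ 0 := by exact_mod_cast hr0
  have e1 : (r : ℂ) - e = w * m := by exact_mod_cast hm
  have e2 : (r : ℂ) = w + s := by exact_mod_cast hr
  have e3 : (e : ℂ) * e = 1 := by exact_mod_cast he
  refine ⟨[(-1, 1), (m, -(e * r * (1 + m))), (1, -1), (-m, 1)], by simp,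
    by simp [hm2, hm0, he0, hr0], ?_⟩
  have f1 : (1 : ℂ) + -1 * (-m * (s / r)) = (r + s * m) / r := by
    field_simp
  have f2 : -(m : ℂ) * (s / r) + 1 * (s / r) * ((r + s * m) / r) = e * s / r ^ 2 := by
    field_simp
    linear_combination (s : ℂ) * (e1 - m * e2)
  have f3 : (r + s * m : ℂ) / r + -(e * r * (1 + m)) * (e * s / r ^ 2) = w / r := by
    field_simp
    linear_combination e2 - s * (1 + m) * e3
  have f4 : (e * s : ℂ) / r ^ 2 + m * (s / r) * (w / r) = s / r := by
    field_simp
    linear_combination - (s : ℂ) * e1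
  have f5 : (w : ℂ) / r + s / r = 1 := by
    field_simp
    linear_combination - e2
  simp only [vecq, Int.cast_neg, Int.cast_one, Int.cast_mul, Int.cast_add, zero_add, mul_zero, add_zero, mul_one]
  rw [f1, f2, f3, f4, one_mul, f5]
  ring

theorem wit_main (s w r e : ℤ) (hs : 1 < s)
    (hw : w = 3 ∨ w = -3 ∨ w = 4 ∨ w = -4 ∨ w = 6 ∨ w = -6) (hr : r = w + s) (hr0 : r ≠ 0)
    (hb : s < 4 * |r|) (he : e = 1 ∨ e = -1) (hd : w ∣ s - e) : Wit ((s : ℂ) / (r : ℂ)) := by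
  obtain ⟨k, hk⟩ := hd
  by_cases hm0 : k + 1 = 0
  · have hk1 : k = -1 := by omega
    subst hk1
    have hre : r = e := by linarith
    have hsv : s = e - w := by linarith
    subst hre
    rcases he with rfl | rfl <;> rcases hw with rfl | rfl | rfl | rfl | rfl | rfl <;>
      norm_num at hsv <;> subst hsv <;> (try norm_num at hs) <;> (try norm_num at hb)
    · apply wit_neg
      convert wit_2_1 using 1
      norm_num
    · apply wit_neg
      convert wit_3_1 using 1
      norm_num
  by_cases hm1 : k + 1 = -1
  · have hk1 : k = -2 := by omega
    subst hk1
    have hre : r = e - w := by linarith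
    have hsv : s = e - 2 * w := by linarith
    clear hr
    rcases he with rfl | rfl <;> rcases hw with rfl | rfl | rfl | rfl | rfl | rfl <;>
      norm_num at hsv hre <;> subst hsv hre <;> try norm_num at hs
    · convert wit_7_4 using 1; norm_num
    · convert wit_9_5 using 1; norm_num
    · convert wit_13_7 using 1; norm_num
    · convert wit_5_2 using 1; norm_num
    · convert wit_7_3 using 1; norm_num
    · convert wit_11_5 using 1; norm_num
  exact wit_W2 s w r (k + 1) e hr hr0 (by rcases he with rfl | rfl <;> norm_num)
    (by linarith) hm0 hm1

/-- same with `t = ±1` -/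
theorem wit_main' (s w t r e : ℤ) (hs : 1 < s) (ht : t = 1 ∨ t = -1)
    (hw : w = 3 ∨ w = 4 ∨ w = 6) (hr : r = w + s * t) (hr0 : r ≠ 0)
    (hb : s < 4 * |r|) (he : e = 1 ∨ e = -1) (hd : w ∣ s - e) : Wit ((s : ℂ) / (r : ℂ)) := by
  rcases ht with rfl | rfl
  · exact wit_main s w r e hs (by omega) (by omega) hr0 hb he hd
  · apply wit_neg
    have := wit_main s (-w) (-r) e hs (by omega) (by omega) (by omega) (by simpa using hb) he
      (by simpa using hd)
    convert this using 1
    push_cast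
    rw [div_neg]

theorem wit_int (t : ℤ) (ht : t ≠ 0) : Wit ((1 : ℂ) / (t : ℂ)) := by
  have hc : (t : ℂ) ≠ 0 := by exact_mod_cast ht
  exact wit_scale (1 / 1) _ t ht (by field_simp) wit_1_1

theorem core2 (s t r : ℤ) (ht : t ≠ 0) (hr : r = 2 + s * t) (hr0 : r ≠ 0) :
    Wit ((s : ℂ) / (r : ℂ)) := by
  rcases Int.even_or_odd' t with ⟨c, hc | hc⟩
  · exact wit_W0 s 2 t r hr hr0 ht ⟨s * (2 * c ^ 2), by rw [hc]; ring⟩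
  · by_cases h1 : t = 1
    · exact wit_W1 s 2 t r (-1) hr hr0 ht (by subst h1; norm_num) (by omega) (by omega)
    · exact wit_W1 s 2 t r 1 hr hr0 ht (one_dvd _) h1 (by omega)

theorem core3 (s t r : ℤ) (hs : 0 < s) (ht : t ≠ 0) (hr : r = 3 + s * t) (hr0 : r ≠ 0)
    (hb : s < 4 * |r|) : Wit ((s : ℂ) / (r : ℂ)) := by
  rcases eq_or_ne s 1 with rfl | hs1
  · simpa using wit_int r hr0
  by_cases h0 : (3 : ℤ) ∣ t
  · exact wit_W0 s 3 t r hr hr0 ht (dvd_mul_of_dvd_right (dvd_pow h0 (by norm_num)) _)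
  by_cases h3 : (3 : ℤ) ∣ s
  · exact wit_W0 s 3 t r hr hr0 ht (dvd_mul_of_dvd_left h3 _)
  by_cases h1 : t = 1 ∨ t = -1
  · by_cases h4 : (3 : ℤ) ∣ s - 1
    · exact wit_main' s 3 t r 1 (by omega) h1 (by omega) hr hr0 hb (by omega) h4
    · exact wit_main' s 3 t r (-1) (by omega) h1 (by omega) hr hr0 hb (by omega) (by omega)
  by_cases h5 : (3 : ℤ) ∣ t - 1
  · exact wit_W1 s 3 t r 1 hr hr0 ht (one_dvd _) (by omega) h5
  · exact wit_W1 s 3 t r (-1) hr hr0 ht (by norm_num) (by omega) (by omega)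

theorem core4 (s t r : ℤ) (hs : 0 < s) (ht : t ≠ 0) (hr : r = 4 + s * t) (hr0 : r ≠ 0)
    (hb : s < 4 * |r|) : Wit ((s : ℂ) / (r : ℂ)) := by
  rcases eq_or_ne s 1 with rfl | hs1
  · simpa using wit_int r hr0
  rcases Int.even_or_odd' t with ⟨c, hc | hc⟩
  · exact wit_W0 s 4 t r hr hr0 ht ⟨s * c ^ 2, by rw [hc]; ring⟩
  rcases Int.even_or_odd' s with ⟨d, hd | hd⟩
  · have h2 : r = 2 * (2 + d * t) := by rw [hr, hd]; ring
    have h3 : (2 + d * t) ≠ 0 := by rintro h; rw [h] at h2; omega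
    have := core2 d t (2 + d * t) ht rfl h3
    convert this using 1
    rw [h2, hd]
    push_cast
    rw [mul_div_mul_left _ _ (by norm_num)]
  by_cases h1 : t = 1 ∨ t = -1
  · by_cases h4 : (4 : ℤ) ∣ s - 1
    · exact wit_main' s 4 t r 1 (by omega) h1 (by omega) hr hr0 hb (by omega) h4
    · exact wit_main' s 4 t r (-1) (by omega) h1 (by omega) hr hr0 hb (by omega) (by omega)
  by_cases h5 : (4 : ℤ) ∣ t - 1
  · exact wit_W1 s 4 t r 1 hr hr0 ht (one_dvd _) (by omega) h5
  · exact wit_W1 s 4 t r (-1) hr hr0 ht (by norm_num) (by omega) (by omega)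

theorem core6 (s t r : ℤ) (hs : 0 < s) (ht : t ≠ 0) (hr : r = 6 + s * t) (hr0 : r ≠ 0)
    (hb : s < 4 * |r|) : Wit ((s : ℂ) / (r : ℂ)) := by
  rcases eq_or_ne s 1 with rfl | hs1
  · simpa using wit_int r hr0
  by_cases g2 : t = 2 ∨ t = -2
  · by_cases hx : t = -2 ∧ s = 4
    · obtain ⟨rfl, rfl⟩ := hx
      norm_num at hr
      subst hr
      apply wit_neg
      convert wit_2_1 using 1
      norm_num
    obtain ⟨u, hu⟩ : ∃ u, t = 2 * u := ⟨t / 2, by omega⟩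
    have h2 : r = 2 * (3 + s * u) := by rw [hr, hu]; ring
    have h3 : (3 + s * u) ≠ 0 := by rintro h; rw [h] at h2; omega
    have hbb : s < 4 * |3 + s * u| := by
      have : u = 1 ∨ u = -1 := by omega
      rcases this with rfl | rfl
      · rw [lt_iff_not_ge]; intro h
        have := le_abs_self (3 + s * 1)
        omega
      · have h8 := le_abs_self (3 + s * -1)
        have h9 := neg_le_abs (3 + s * -1)
        omega
    have := core3 s u (3 + s * u) hs (by omega) rfl h3 hbb
    apply wit_scale _ _ 2 (by norm_num) _ this
    have h3c : ((3 + s * u : ℤ) : ℂ) ≠ 0 := by exact_mod_cast h3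
    rw [h2, Int.cast_mul]
    field_simp
  by_cases g1 : t = 1 ∨ t = -1
  · by_cases g3 : (2 : ℤ) ∣ s
    · obtain ⟨d, hd⟩ := g3
      have h2 : r = 2 * (3 + d * t) := by rw [hr, hd]; ring
      have h3 : (3 + d * t) ≠ 0 := by rintro h; rw [h] at h2; omega
      have := core3 d t (3 + d * t) (by omega) ht rfl h3 (by
        rw [h2, abs_mul, hd] at hb
        norm_num at hb
        linarith)
      convert this using 1
      rw [h2, hd]
      push_cast
      rw [mul_div_mul_left _ _ (by norm_num)]
    by_cases g4 : (3 : ℤ) ∣ s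
    · obtain ⟨d, hd⟩ := g4
      have h2 : r = 3 * (2 + d * t) := by rw [hr, hd]; ring
      have h3 : (2 + d * t) ≠ 0 := by rintro h; rw [h] at h2; omega
      have := core2 d t (2 + d * t) ht rfl h3
      convert this using 1
      rw [h2, hd]
      push_cast
      rw [mul_div_mul_left _ _ (by norm_num)]
    have g5 : s % 6 = 1 ∨ s % 6 = 5 := by
      have : s % 6 = 0 ∨ s % 6 = 1 ∨ s % 6 = 2 ∨ s % 6 = 3 ∨ s % 6 = 4 ∨ s % 6 = 5 := by omega
      rcases this with h | h | h | h | h | h <;> omega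
    by_cases h4 : (6 : ℤ) ∣ s - 1
    · exact wit_main' s 6 t r 1 (by omega) g1 (by omega) hr hr0 hb (by omega) h4
    · exact wit_main' s 6 t r (-1) (by omega) g1 (by omega) hr hr0 hb (by omega) (by omega)
  have : t % 6 = 0 ∨ t % 6 = 1 ∨ t % 6 = 2 ∨ t % 6 = 3 ∨ t % 6 = 4 ∨ t % 6 = 5 := by omega
  rcases this with h | h | h | h | h | h
  · have h0 : (6 : ℤ) ∣ t := by omega
    exact wit_W0 s 6 t r hr hr0 ht (dvd_mul_of_dvd_right (dvd_pow h0 (by norm_num)) _)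
  · exact wit_W1 s 6 t r 1 hr hr0 ht (by omega) (by omega) (by omega)
  · exact wit_W1 s 6 t r 2 hr hr0 ht (by omega) (by omega) (by omega)
  · by_cases h3 : t = 3
    · exact wit_W1 s 6 t r (-3) hr hr0 ht (neg_dvd.mpr (by omega)) (by omega) (by omega)
    · exact wit_W1 s 6 t r 3 hr hr0 ht (by omega) (by omega) (by omega)
  · exact wit_W1 s 6 t r (-2) hr hr0 ht (neg_dvd.mpr (by omega)) (by omega) (by omega)
  · exact wit_W1 s 6 t r (-1) hr hr0 ht (neg_dvd.mpr (by omega)) (by omega) (by omega)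

theorem core0 (s w : ℤ) (hs : 0 < s) (hw : w = 1 ∨ w = 2 ∨ w = 3 ∨ w = 4 ∨ w = 6)
    (hb : s < 4 * w) : Wit ((s : ℂ) / (w : ℂ)) := by
  rcases hw with rfl | rfl | rfl | rfl | rfl
  · interval_cases s
    · convert wit_1_1 using 1; norm_num
    · convert wit_2_1 using 1; norm_num
    · convert wit_3_1 using 1; norm_num
  · interval_cases s
    · convert wit_1_2 using 1; norm_num
    · convert wit_1_1 using 1; norm_num
    · convert wit_3_2 using 1; norm_num
    · convert wit_2_1 using 1; norm_num
    · convert wit_5_2 using 1; norm_num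
    · convert wit_3_1 using 1; norm_num
    · convert wit_7_2 using 1; norm_num
  · interval_cases s
    · convert wit_1_3 using 1; norm_num
    · convert wit_2_3 using 1; norm_num
    · convert wit_1_1 using 1; norm_num
    · convert wit_4_3 using 1; norm_num
    · convert wit_5_3 using 1; norm_num
    · convert wit_2_1 using 1; norm_num
    · convert wit_7_3 using 1; norm_num
    · convert wit_8_3 using 1; norm_num
    · convert wit_3_1 using 1; norm_num
    · convert wit_10_3 using 1; norm_num
    · convert wit_11_3 using 1; norm_num
  · interval_cases s
    · convert wit_1_4 using 1; norm_num
    · convert wit_1_2 using 1; norm_num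
    · convert wit_3_4 using 1; norm_num
    · convert wit_1_1 using 1; norm_num
    · convert wit_5_4 using 1; norm_num
    · convert wit_3_2 using 1; norm_num
    · convert wit_7_4 using 1; norm_num
    · convert wit_2_1 using 1; norm_num
    · convert wit_9_4 using 1; norm_num
    · convert wit_5_2 using 1; norm_num
    · convert wit_11_4 using 1; norm_num
    · convert wit_3_1 using 1; norm_num
    · convert wit_13_4 using 1; norm_num
    · convert wit_7_2 using 1; norm_num
    · convert wit_15_4 using 1; norm_num
  · interval_cases s
    · convert wit_1_6 using 1; norm_num
    · convert wit_1_3 using 1; norm_num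
    · convert wit_1_2 using 1; norm_num
    · convert wit_2_3 using 1; norm_num
    · convert wit_5_6 using 1; norm_num
    · convert wit_1_1 using 1; norm_num
    · convert wit_7_6 using 1; norm_num
    · convert wit_4_3 using 1; norm_num
    · convert wit_3_2 using 1; norm_num
    · convert wit_5_3 using 1; norm_num
    · convert wit_11_6 using 1; norm_num
    · convert wit_2_1 using 1; norm_num
    · convert wit_13_6 using 1; norm_num
    · convert wit_7_3 using 1; norm_num
    · convert wit_5_2 using 1; norm_num
    · convert wit_8_3 using 1; norm_num
    · convert wit_17_6 using 1; norm_num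
    · convert wit_3_1 using 1; norm_num
    · convert wit_19_6 using 1; norm_num
    · convert wit_10_3 using 1; norm_num
    · convert wit_7_2 using 1; norm_num
    · convert wit_11_3 using 1; norm_num
    · convert wit_23_6 using 1; norm_num

theorem core (s w t r : ℤ) (hs : 0 < s)
    (hw : w = 0 ∨ w = 1 ∨ w = 2 ∨ w = 3 ∨ w = 4 ∨ w = 6) (hr : r = w + s * t) (hr0 : r ≠ 0)
    (hb : s < 4 * |r|) : Wit ((s : ℂ) / (r : ℂ)) := by
  by_cases hw0 : w = 0
  · subst hw0
    have ht : t ≠ 0 := by rintro rfl; simp at hr; exact hr0 hr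
    have hsc : (s : ℂ) ≠ 0 := by exact_mod_cast hs.ne'
    have htc : (t : ℂ) ≠ 0 := by exact_mod_cast ht
    convert wit_int t ht using 1
    rw [hr]
    push_cast
    field_simp
    simp
  by_cases ht : t = 0
  · subst ht
    simp at hr
    subst hr
    rw [abs_of_pos (by omega)] at hb
    exact core0 s r hs (by omega) hb
  rcases hw with rfl | rfl | rfl | rfl | rfl | rfl
  · exact absurd rfl hw0
  · exact wit_W0 s 1 t r hr hr0 ht (one_dvd _)
  · exact core2 s t r ht hr hr0
  · exact core3 s t r hs ht hr hr0 hb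
  · exact core4 s t r hs ht hr hr0 hb
  · exact core6 s t r hs ht hr hr0 hb

theorem good_aux (s w : ℤ) (hw : w = 1 ∨ w = 2 ∨ w = 3 ∨ w = 4 ∨ w = 6) :
    w ∣ s + (Int.gcd w s : ℤ) ∨ w ∣ s - (Int.gcd w s : ℤ) := by
  have e : Int.gcd w s = Int.gcd (s % w) w := by
    rw [Int.gcd_comm, ← Int.emod_add_mul_ediv s w]
    simp
  rw [e]
  rcases hw with rfl | rfl | rfl | rfl | rfl
  · simp
  · have : s % 2 = 0 ∨ s % 2 = 1 := by omega
    rcases this with h | h <;> rw [h] <;> norm_num <;> omega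
  · have : s % 3 = 0 ∨ s % 3 = 1 ∨ s % 3 = 2 := by omega
    rcases this with h | h | h <;> rw [h] <;> norm_num <;> omega
  · have : s % 4 = 0 ∨ s % 4 = 1 ∨ s % 4 = 2 ∨ s % 4 = 3 := by omega
    rcases this with h | h | h | h <;> rw [h] <;> norm_num <;> omega
  · have : s % 6 = 0 ∨ s % 6 = 1 ∨ s % 6 = 2 ∨ s % 6 = 3 ∨ s % 6 = 4 ∨ s % 6 = 5 := by omega
    rcases this with h | h | h | h | h | h <;> rw [h] <;> norm_num <;> omega

theorem stmt15 (s : ℤ) (hs : 1 < s) (w : ℤ) (hw : |w| ≤ 4 ∨ |w| = 6) :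
    (w ≠ 0 → IsGoodRep s w 1) ∧
      ∀ t : ℤ, w + s * t ≠ 0 →
        -4 < (s : ℚ) / ((w + s * t : ℤ) : ℚ) → (s : ℚ) / ((w + s * t : ℤ) : ℚ) < 4 →
          IsRelationNumber ((s : ℂ) / (((w + s * t : ℤ)) : ℂ)) := by
  have hcases : (w = 0 ∨ w = 1 ∨ w = 2 ∨ w = 3 ∨ w = 4 ∨ w = 6) ∨
      (-w = 0 ∨ -w = 1 ∨ -w = 2 ∨ -w = 3 ∨ -w = 4 ∨ -w = 6) := by
    rcases abs_cases w with h | h <;> omega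
  constructor
  · intro hw0
    refine ⟨1, by simp, ?_⟩
    simp only [mul_one]
    rcases hcases with h | h
    · exact good_aux s w (by omega)
    · have := good_aux s (-w) (by omega)
      rw [Int.neg_gcd] at this
      simpa only [neg_dvd] using this
  · intro t hr0 h1 h2
    apply rel_of_wit
    have hb : s < 4 * |w + s * t| := by
      have h3 : |(s : ℚ) / ((w + s * t : ℤ) : ℚ)| < 4 := abs_lt.mpr ⟨h1, h2⟩
      have hp : (0 : ℚ) < |((w + s * t : ℤ) : ℚ)| := abs_pos.mpr (by exact_mod_cast hr0)
      rw [abs_div, div_lt_iff₀ hp] at h3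
      have h4 : |s| < 4 * |w + s * t| := by exact_mod_cast h3
      exact lt_of_le_of_lt (le_abs_self s) h4
    rcases hcases with h | h
    · exact core s w t _ (by omega) h rfl hr0 hb
    · apply wit_neg
      have := core s (-w) (-t) (-(w + s * t)) (by omega) h (by ring) (by omega)
        (by rw [abs_neg]; exact hb)
      convert this using 1
      rw [Int.cast_neg, div_neg]
end

section
/- Let s and r be positive integers with s/r < 4 and gcd(s,r) = 1. (1) If r ≤ 8, then s/r is a relation number. (2) If s ≤ 30 and s/r ≥ 1/10, then s/r is a relation number. -/
open Matrix

namespace RelNum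

/-- Evaluate the word with the given exponents (alternately of `a` and `b_q`) on `(X, Y)`
and return the second coordinate. -/
def evC (q : ℂ) : List ℤ → ℂ → ℂ → ℂ
  | [], _, Y => Y
  | [m], X, Y => Y + m * X
  | m :: n :: t, X, Y => evC q t (X + n * q * (Y + m * X)) (Y + m * X)

/-- The same with integers, for `q = s / r`, up to a scalar. -/
def evZ (s r : ℤ) : List ℤ → ℤ → ℤ → ℤ
  | [], _, Y => Y
  | [m], X, Y => Y + m * X
  | m :: n :: t, X, Y => evZ s r t (r * X + n * s * (Y + m * X)) (r * (Y + m * X))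

theorem evC_smul (q c : ℂ) (l : List ℤ) (X Y : ℂ) :
    evC q l (c * X) (c * Y) = c * evC q l X Y := by
  induction l, X, Y using evC.induct q with
  | case1 => simp [evC]
  | case2 => simp [evC]; ring
  | case3 m n t X Y ih =>
    simp only [evC]
    rw [← ih]
    congr 1 <;> ring

theorem evZ_evC (s r : ℤ) (hr : r ≠ 0) (l : List ℤ) (X Y : ℤ) :
    ∃ c : ℂ, c ≠ 0 ∧ (evZ s r l X Y : ℂ) = c * evC ((s : ℂ) / r) l X Y := by
  induction l, X, Y using evZ.induct s r with
  | case1 => exact ⟨1, one_ne_zero, by simp [evC, evZ]⟩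
  | case2 => exact ⟨1, one_ne_zero, by simp [evC, evZ]⟩
  | case3 m n t X Y ih =>
    obtain ⟨c, hc, h⟩ := ih
    have hr' : (r : ℂ) ≠ 0 := by exact_mod_cast hr
    refine ⟨c * r, mul_ne_zero hc hr', ?_⟩
    simp only [evC, evZ]
    rw [h]
    have e1 : ((r * X + n * s * (Y + m * X) : ℤ) : ℂ)
        = r * ((X : ℂ) + n * (s / r) * (Y + m * X)) := by
      push_cast; field_simp
    have e2 : ((r * (Y + m * X) : ℤ) : ℂ) = r * ((Y : ℂ) + m * X) := by push_cast; rfl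
    rw [e1, e2, evC_smul, ← mul_assoc c]

abbrev phi (q : ℂ) : FreeGroup Bool →* Matrix.SpecialLinearGroup (Fin 2) ℂ :=
  FreeGroup.lift (fun i : Bool => if i then matA else matB q)

def wd : List ℤ → FreeGroup Bool
  | [] => 1
  | [m] => FreeGroup.of true ^ m
  | m :: n :: t => wd t * (FreeGroup.of false ^ n * FreeGroup.of true ^ m)

/-- Multiply the exponents of `b` by `k`. -/
def scl (k : ℤ) : List ℤ → List ℤ
  | [] => []
  | [m] => [m]
  | m :: n :: t => m :: (k * n) :: scl k t

theorem evC_scl (q : ℂ) (k : ℤ) (hk : k ≠ 0) (l : List ℤ) (X Y : ℂ) :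
    evC (q / k) (scl k l) X Y = evC q l X Y := by
  have hk' : (k : ℂ) ≠ 0 := by exact_mod_cast hk
  induction l, X, Y using evC.induct q with
  | case1 => simp [evC, scl]
  | case2 => simp [evC, scl]
  | case3 m n t X Y ih =>
    simp only [evC, scl]
    rw [← ih]
    congr 2
    push_cast
    field_simp

abbrev SLC := Matrix.SpecialLinearGroup (Fin 2) ℂ

/-- The underlying matrix. -/
def vl (M : SLC) : Matrix (Fin 2) (Fin 2) ℂ := (M : Matrix (Fin 2) (Fin 2) ℂ)

theorem vl_inj {M N : SLC} (h : vl M = vl N) : M = N := Subtype.ext h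

theorem vl_one : vl 1 = 1 := rfl

theorem vl_mul (M N : SLC) : vl (M * N) = vl M * vl N := Matrix.SpecialLinearGroup.coe_mul M N

theorem vl_inv (M : SLC) : vl M⁻¹ = (vl M).adjugate := Matrix.SpecialLinearGroup.coe_inv M

theorem vl_det (M : SLC) : (vl M).det = 1 := Matrix.SpecialLinearGroup.det_coe M

theorem vl_B (q : ℂ) : vl (matB q) = !![1, q; 0, 1] := rfl

def matA' (q : ℂ) : SLC := ⟨!![1, 0; q, 1], by simp [Matrix.det_fin_two_of]⟩

theorem vl_A (q : ℂ) : vl (matA' q) = !![1, 0; q, 1] := rfl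

theorem matB_zpow (q : ℂ) (n : ℤ) : matB q ^ n = matB (n * q) := by
  have hadd : ∀ u v : ℂ, matB u * matB v = matB (u + v) := by
    intro u v
    apply vl_inj
    rw [vl_mul, vl_B, vl_B, vl_B]
    simp [add_comm]
  have h0 : matB 0 = 1 := by
    apply vl_inj
    rw [vl_B, vl_one, Matrix.one_fin_two]
  induction n using Int.induction_on with
  | zero => simp [h0]
  | succ n ih => rw [_root_.zpow_add_one, ih, hadd]; congr 1; push_cast; ring
  | pred n ih =>
    rw [_root_.zpow_sub_one, ih, mul_inv_eq_iff_eq_mul, hadd]; congr 1; push_cast; ring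

theorem matA_zpow (n : ℤ) : matA ^ n = matA' n := by
  have hadd : ∀ u v : ℂ, matA' u * matA' v = matA' (u + v) := by
    intro u v
    apply vl_inj
    rw [vl_mul, vl_A, vl_A, vl_A]
    simp
  have h1 : matA = matA' 1 := rfl
  have h0 : matA' 0 = 1 := by
    apply vl_inj
    rw [vl_A, vl_one, Matrix.one_fin_two]
  rw [h1]
  induction n using Int.induction_on with
  | zero => simp [h0]
  | succ n ih => rw [_root_.zpow_add_one, ih, hadd]; congr 1; push_cast; ring
  | pred n ih =>
    rw [_root_.zpow_sub_one, ih, mul_inv_eq_iff_eq_mul, hadd]; congr 1; push_cast; ring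

theorem phi_x (q : ℂ) : phi q (FreeGroup.of true) = matA := by simp [phi]

theorem phi_y (q : ℂ) : phi q (FreeGroup.of false) = matB q := by simp [phi]

theorem evC_wd (q : ℂ) (l : List ℤ) (X Y : ℂ) :
    evC q l X Y = vl (phi q (wd l)) 1 0 * X + vl (phi q (wd l)) 1 1 * Y := by
  induction l, X, Y using evC.induct q with
  | case1 => simp [evC, wd, vl_one]
  | case2 m X Y =>
    rw [evC, wd, map_zpow, phi_x, matA_zpow, vl_A]
    simp
    ring
  | case3 m n t X Y ih =>
    rw [evC, wd, ih, map_mul, map_mul, map_zpow, map_zpow, phi_x, phi_y, matA_zpow, matB_zpow,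
      vl_mul, vl_mul, vl_A, vl_B]
    simp [Matrix.mul_apply, Fin.sum_univ_two]
    ring

theorem conj_entry (q : ℂ) (M : SLC) :
    vl (M * matB q * M⁻¹) = !![1 - q * vl M 0 0 * vl M 1 0, q * vl M 0 0 ^ 2;
      - q * vl M 1 0 ^ 2, 1 + q * vl M 0 0 * vl M 1 0] := by
  have hd := vl_det M
  rw [Matrix.det_fin_two] at hd
  rw [vl_mul, vl_mul, vl_inv, vl_B, Matrix.adjugate_fin_two]
  ext i j
  fin_cases i <;> fin_cases j <;> simp [Matrix.mul_apply, Fin.sum_univ_two]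
  · linear_combination hd
  · ring
  · ring
  · linear_combination hd

theorem rel_of_word (q q' : ℂ) (hq' : q' ≠ 0) (l : List ℤ) (h : evC q l 1 0 = 0)
    (h' : evC q' l 1 0 ≠ 0) : IsRelationNumber q := by
  intro hinj
  rw [evC_wd] at h h'
  simp only [mul_one, mul_zero, add_zero] at h h'
  set w := wd l
  have hc : w * FreeGroup.of false * w⁻¹ * FreeGroup.of false
      = FreeGroup.of false * (w * FreeGroup.of false * w⁻¹) := by
    apply hinj
    change phi q _ = phi q _
    rw [map_mul, map_mul _ _ (w * FreeGroup.of false * w⁻¹), map_mul, map_mul, map_inv, phi_y]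
    apply vl_inj
    rw [vl_mul, vl_mul _ (_ * _), conj_entry, h, vl_B]
    simp [add_comm]
  have hc' := congrArg (fun u => vl (phi q' u) 0 0) hc
  rw [map_mul, map_mul _ _ (w * FreeGroup.of false * w⁻¹), map_mul, map_mul, map_inv, phi_y,
    vl_mul, vl_mul _ (_ * _), conj_entry, vl_B] at hc'
  simp at hc'
  tauto

/-- Exponents are tabulated as natural numbers: `2k` stands for `k`, `2k+1` for `-k`. -/
def dec (n : ℕ) : ℤ := if n % 2 = 0 then ((n / 2 : ℕ) : ℤ) else -((n / 2 : ℕ) : ℤ)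

/-- The check of one certificate. -/
def chk (s : ℕ) (e : ℕ × List ℕ) : Bool :=
  Nat.blt 0 e.1 && (evZ s e.1 (e.2.map dec) 1 0 == 0) && !(evZ 5 1 (e.2.map dec) 1 0 == 0)

theorem rel_of_chk (s : ℕ) (e : ℕ × List ℕ) (h : chk s e = true) (r : ℕ) (hr : 0 < r)
    (hd : e.1 ∣ r) : IsRelationNumber ((s : ℂ) / (r : ℂ)) := by
  obtain ⟨d, l'⟩ := e
  obtain ⟨k, rfl⟩ := hd
  simp only [chk, Bool.and_eq_true, Nat.blt_eq, beq_iff_eq, Bool.not_eq_true',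
    beq_eq_false_iff_ne] at h
  obtain ⟨⟨hd, h1⟩, h2⟩ := h
  set l := l'.map dec
  have hk : (k : ℤ) ≠ 0 := by
    rintro hk
    have : k = 0 := by exact_mod_cast hk
    simp [this] at hr
  obtain ⟨c, hc, e1⟩ := evZ_evC s d (by exact_mod_cast hd.ne') l 1 0
  obtain ⟨c', hc', e2⟩ := evZ_evC 5 1 one_ne_zero l 1 0
  rw [h1] at e1
  have z1 : evC ((s : ℂ) / d) l 1 0 = 0 := by
    simpa [hc] using e1.symm
  have z2 : evC (5 : ℂ) l 1 0 ≠ 0 := by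
    intro h0
    apply h2
    have : ((evZ 5 1 l 1 0 : ℤ) : ℂ) = 0 := by
      rw [e2]; simp [h0]
    exact_mod_cast this
  have hkC : ((k : ℤ) : ℂ) ≠ 0 := by exact_mod_cast hk
  have := rel_of_word ((s : ℂ) / d / (k : ℤ)) (5 / (k : ℤ)) (div_ne_zero (by norm_num) hkC)
    (scl k l) (by rw [evC_scl _ _ hk, z1]) (by rw [evC_scl _ _ hk]; exact z2)
  convert this using 1
  push_cast
  rw [div_div]

def anyDvd (r : ℕ) : List (ℕ × List ℕ) → Bool
  | [] => false
  | e :: t => Nat.beq (r % e.1) 0 || anyDvd r t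

/-- All relevant denominators `1, …, n` are multiples of a tabulated one. -/
def cover (s : ℕ) (L : List (ℕ × List ℕ)) : ℕ → Bool
  | 0 => true
  | n + 1 => cover s L n &&
    (!(Nat.beq (Nat.gcd s (n + 1)) 1) || Nat.ble (4 * (n + 1)) s ||
      (!(Nat.ble (n + 1) 8) && !(Nat.ble s 30 && Nat.ble (n + 1) (10 * s))) ||
      anyDvd (n + 1) L)

def chkRow (p : ℕ × List (ℕ × List ℕ)) : Bool :=
  p.2.all (chk p.1) && cover p.1 p.2 300

theorem anyDvd_spec (r : ℕ) (L : List (ℕ × List ℕ)) (h : anyDvd r L = true) :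
    ∃ e ∈ L, e.1 ∣ r := by
  induction L with
  | nil => simp [anyDvd] at h
  | cons e t ih =>
    simp only [anyDvd, Bool.or_eq_true, Nat.beq_eq] at h
    rcases h with h | h
    · exact ⟨e, by simp, Nat.dvd_of_mod_eq_zero h⟩
    · obtain ⟨e', he, hd⟩ := ih h
      exact ⟨e', by simp [he], hd⟩

theorem cover_spec (s : ℕ) (L : List (ℕ × List ℕ)) (n : ℕ) (h : cover s L n = true) (r : ℕ)
    (hr : 0 < r) (hrn : r ≤ n) (hg : Nat.gcd s r = 1) (h4 : s < 4 * r)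
    (hc : r ≤ 8 ∨ (s ≤ 30 ∧ r ≤ 10 * s)) : ∃ e ∈ L, e.1 ∣ r := by
  induction n with
  | zero => omega
  | succ n ih =>
    rw [cover, Bool.and_eq_true] at h
    rcases Nat.lt_or_ge n r with hlt | hge
    · obtain rfl : r = n + 1 := by omega
      apply anyDvd_spec
      have h2 := h.2
      simp only [Bool.or_eq_true, Bool.and_eq_true, Bool.not_eq_true', Nat.ble_eq,
        ← Bool.not_eq_true, Nat.beq_eq] at h2
      rcases h2 with ((h2 | h2) | h2) | h2
      · exact absurd hg h2
      · omega
      · exfalso; omega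
      · exact h2
    · exact ih h.1 hge

def tab1 : List (ℕ × List ℕ) :=
  [(1, [2, 5, 2])]

def tab2 : List (ℕ × List ℕ) :=
  [(1, [2, 3, 2])]

def tab3 : List (ℕ × List ℕ) :=
  [(1, [2, 3, 2, 3, 2])]

def tab4 : List (ℕ × List ℕ) :=
  [(3, [2, 3, 6]), (5, [2, 5, 4, 11, 2]), (7, [2, 5, 14]), (11, [2, 7, 22]),
   (13, [2, 9, 8, 26, 3]), (17, [2, 11, 12, 35, 2]), (19, [2, 11, 38]), (23, [2, 13, 46]),
   (29, [2, 17, 20, 59, 2]), (31, [2, 17, 62]), (37, [2, 21, 24, 74, 3])]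

def tab5 : List (ℕ × List ℕ) :=
  [(2, [4, 2, 3, 2, 3]), (3, [6, 3, 2, 7, 2]), (7, [4, 3, 14, 5, 2]), (11, [2, 7, 6, 23, 2]),
   (13, [4, 3, 27, 5, 2]), (17, [4, 5, 34, 9, 2]), (19, [2, 9, 38]), (23, [4, 5, 47, 9, 2]),
   (29, [2, 13, 58]), (31, [2, 15, 16, 63, 2]), (37, [4, 9, 74, 17, 2]), (41, [2, 19, 20, 82, 3]),
   (43, [4, 9, 87, 17, 2]), (47, [4, 11, 94, 21, 2])]

def tab6 : List (ℕ × List ℕ) :=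
  [(5, [2, 3, 10]), (7, [2, 3, 15]), (11, [2, 5, 22]), (13, [2, 5, 27]), (17, [2, 7, 34]),
   (19, [2, 9, 8, 39, 2]), (23, [2, 9, 46]), (29, [2, 11, 58]), (31, [2, 13, 12, 62, 3]),
   (37, [2, 13, 75]), (41, [2, 15, 82]), (43, [2, 15, 87]), (47, [2, 17, 94]), (53, [2, 19, 106]),
   (59, [2, 21, 118])]

def tab7 : List (ℕ × List ℕ) :=
  [(2, [4, 3, 2, 3, 2, 3, 2, 3, 4]), (3, [6, 3, 2, 3, 6]), (5, [2, 3, 4, 11, 3, 2, 5]),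
   (11, [4, 3, 22, 5, 2]), (13, [2, 5, 26]), (17, [4, 3, 35, 5, 2]), (19, [6, 3, 38, 6, 3]),
   (23, [6, 3, 47, 6, 3]), (29, [2, 11, 10, 59, 2]), (31, [4, 5, 63, 9, 2]),
   (37, [6, 5, 74, 7, 4]), (41, [2, 13, 82]), (43, [2, 15, 14, 86, 3]), (47, [6, 5, 95, 7, 4]),
   (53, [4, 9, 106, 17, 2]), (59, [4, 9, 119, 17, 2]), (61, [6, 7, 122, 18, 3]),
   (67, [4, 11, 134, 21, 2])]

def tab8 : List (ℕ × List ℕ) :=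
  [(3, [6, 2, 3, 2, 3, 6, 3]), (5, [2, 3, 2, 2, 21]), (7, [2, 3, 14]),
   (11, [2, 3, 5, 3, 16, 23, 2]), (13, [4, 3, 26, 5, 2]), (17, [2, 5, 35]), (19, [4, 3, 39, 5, 2]),
   (23, [2, 7, 46]), (29, [4, 5, 58, 9, 2]), (31, [2, 9, 62]), (37, [2, 11, 26, 15, 148]),
   (41, [2, 13, 12, 83, 2]), (43, [6, 5, 86, 7, 4]), (47, [2, 13, 94]), (53, [6, 5, 107, 7, 4]),
   (59, [2, 15, 39, 23, 237]), (61, [4, 9, 122, 17, 2]), (67, [4, 9, 135, 17, 2]),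
   (71, [2, 19, 142]), (73, [2, 19, 147]), (79, [2, 21, 158])]

def tab9 : List (ℕ × List ℕ) :=
  [(4, [4, 4, 3, 2, 3]), (5, [2, 3, 2, 4, 10, 4, 2, 3, 2]), (7, [2, 3, 14, 3, 2]),
   (11, [2, 3, 13, 22, 6, 3, 4]), (13, [2, 3, 7, 27, 11, 2, 5]), (17, [2, 5, 34]),
   (19, [2, 5, 39]), (23, [6, 3, 46, 7, 2]), (29, [6, 3, 59, 6, 3]), (31, [6, 3, 63, 7, 2]),
   (37, [2, 9, 75]), (41, [2, 11, 20, 82, 16, 8, 3]), (43, [2, 11, 42, 20, 86, 5, 39, 10, 3]),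
   (47, [2, 11, 49, 20, 95, 5, 52, 10, 3]), (53, [2, 13, 106]), (59, [6, 5, 119, 7, 4]),
   (61, [2, 15, 58, 122, 11, 5, 4]), (67, [2, 15, 35, 134, 55, 8, 5]), (71, [2, 17, 142]),
   (73, [2, 19, 18, 146, 3]), (79, [6, 7, 158, 18, 3]), (83, [6, 7, 167, 18, 3]),
   (89, [2, 21, 178])]

def tab10 : List (ℕ × List ℕ) :=
  [(3, [6, 3, 2, 3, 2, 3, 2, 7, 2, 3, 6]), (7, [2, 3, 6, 14, 3, 2, 7]), (11, [2, 3, 23]),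
   (13, [2, 3, 13, 2, 13, 26, 2]), (17, [4, 3, 34, 5, 2]), (19, [2, 5, 38]),
   (23, [4, 3, 47, 5, 2]), (29, [2, 7, 58]), (31, [2, 7, 63]), (37, [4, 5, 74, 9, 2]),
   (41, [2, 9, 83]), (43, [4, 5, 87, 9, 2]), (47, [2, 11, 28, 6, 53, 95, 2]),
   (53, [2, 11, 31, 5, 848]), (59, [2, 13, 118]), (61, [2, 13, 123]), (67, [2, 15, 48, 9, 671]),
   (71, [2, 17, 16, 143, 2]), (73, [2, 15, 51, 22, 293]), (79, [2, 17, 158]),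
   (83, [4, 9, 167, 17, 2]), (89, [2, 19, 178]), (97, [4, 11, 194, 21, 2])]

def tab11 : List (ℕ × List ℕ) :=
  [(3, [6, 5, 2, 3, 2, 3, 2, 3, 2, 3, 2, 5, 6]), (4, [4, 5, 2, 3, 2, 3, 9]),
   (5, [2, 3, 2, 7, 4, 3, 3, 5, 4, 2, 11]), (7, [2, 3, 4, 14, 3, 2, 5]),
   (13, [2, 3, 15, 26, 7, 2, 5]), (17, [4, 3, 14, 35, 6, 2, 3]), (19, [4, 3, 38, 5, 2]),
   (23, [2, 5, 47]), (29, [6, 3, 58, 7, 2]), (31, [6, 3, 62, 6, 3]), (37, [6, 3, 75, 7, 2]),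
   (41, [4, 5, 82, 9, 2]), (43, [2, 9, 86]), (47, [4, 5, 95, 9, 2]),
   (53, [2, 11, 52, 20, 106, 5, 49, 10, 3]), (59, [2, 11, 29, 15, 237, 7, 27, 11, 2]),
   (61, [6, 5, 122, 7, 4]), (67, [2, 13, 135]), (71, [6, 5, 143, 7, 4]),
   (73, [2, 15, 36, 146, 43, 7, 4]), (79, [2, 15, 81, 159, 13, 13, 2]),
   (83, [4, 9, 66, 166, 29, 15, 2]), (89, [2, 19, 18, 179, 2]), (97, [6, 7, 194, 18, 3]),
   (101, [6, 7, 203, 18, 3]), (103, [6, 7, 207, 19, 2]), (107, [4, 11, 214, 21, 2]),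
   (109, [2, 21, 218])]

def tab12 : List (ℕ × List ℕ) :=
  [(5, [2, 3, 2, 3, 3, 10, 3]), (7, [2, 3, 4, 3, 42]), (11, [2, 3, 22]), (13, [2, 3, 27]),
   (17, [2, 3, 9, 4, 8, 35, 3]), (19, [4, 3, 12, 2, 305]), (23, [2, 5, 46]),
   (29, [4, 3, 23, 9, 175]), (31, [6, 3, 32, 2, 807]), (37, [2, 7, 75]),
   (41, [6, 3, 49, 11, 11, 82, 4]), (43, [4, 5, 38, 5, 774]), (47, [2, 9, 94]),
   (53, [4, 5, 43, 45, 107]), (59, [2, 11, 118]), (61, [2, 11, 123]), (67, [6, 5, 134, 7, 4]),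
   (71, [2, 13, 142]), (73, [2, 13, 147]), (79, [2, 15, 32, 159, 68, 4, 7]), (83, [2, 15, 166]),
   (89, [2, 15, 35, 19, 179, 9, 33, 15, 2]), (97, [2, 17, 195]), (101, [4, 9, 83, 28, 606]),
   (103, [6, 7, 118, 6, 262, 206, 3]), (107, [2, 19, 214]), (109, [2, 21, 20, 219, 2]),
   (113, [6, 7, 135, 25, 82, 226, 3])]

def tab13 : List (ℕ × List ℕ) :=
  [(4, [2, 4, 5, 2, 3, 2, 3, 2, 3, 3, 8]), (5, [2, 3, 2, 3, 31]), (6, [4, 6, 3, 2, 3]),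
   (7, [2, 3, 2, 6, 4, 4, 5, 2, 11, 5, 9, 2, 14]), (9, [6, 7, 5, 2, 3]), (11, [2, 3, 22, 3, 2]),
   (17, [2, 3, 9, 35, 4, 5, 2]), (19, [2, 3, 7, 19, 12, 38, 5, 17, 7, 3, 2]),
   (23, [4, 3, 46, 5, 2]), (29, [4, 3, 59, 5, 2]), (31, [4, 3, 27, 8, 187]),
   (37, [6, 3, 74, 6, 3]), (41, [6, 3, 83, 6, 3]), (43, [6, 3, 87, 7, 2]),
   (47, [4, 5, 34, 4, 846]), (53, [2, 9, 107]), (59, [2, 11, 20, 119, 34, 4, 5]),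
   (61, [2, 11, 26, 4, 122, 36, 30, 11, 2]), (67, [2, 11, 69, 135, 18, 4, 5]),
   (71, [2, 11, 25, 142, 20, 13, 2]), (73, [6, 5, 146, 7, 4]), (79, [2, 13, 159]),
   (83, [6, 5, 167, 7, 4]), (89, [2, 15, 88, 178, 16, 12, 3]), (97, [2, 15, 33, 195, 28, 17, 2]),
   (101, [4, 9, 202, 17, 2]), (103, [2, 17, 206]), (107, [4, 9, 215, 17, 2]),
   (109, [4, 9, 87, 29, 654]), (113, [6, 7, 226, 19, 2]), (127, [4, 11, 254, 21, 2])]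

def tab14 : List (ℕ × List ℕ) :=
  [(5, [2, 3, 2, 3, 4, 5, 20]), (9, [6, 6, 5, 2, 3]), (11, [2, 3, 6, 23, 3, 2, 7]),
   (13, [2, 3, 26]), (17, [2, 3, 13, 34, 6, 3, 4]), (19, [2, 3, 7, 38, 3, 2, 6]),
   (23, [4, 3, 18, 16, 47, 5, 20, 3, 4]), (29, [2, 5, 59]), (31, [4, 3, 63, 5, 2]),
   (37, [6, 3, 44, 74, 8, 4, 3]), (41, [2, 7, 82]), (43, [2, 7, 87]),
   (47, [6, 3, 57, 94, 11, 3, 4]), (53, [4, 5, 106, 9, 2]), (59, [4, 5, 119, 9, 2]),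
   (61, [4, 5, 49, 23, 82, 27, 123]), (67, [2, 11, 44, 134, 12, 8, 3]), (71, [2, 11, 143]),
   (73, [2, 11, 51, 147, 15, 3, 6]), (79, [6, 5, 158, 7, 4]), (83, [2, 13, 166]),
   (89, [6, 5, 179, 7, 4]), (97, [2, 15, 194]), (101, [2, 15, 69, 203, 12, 12, 3]),
   (103, [4, 9, 46, 135, 207, 7, 46, 14, 3]), (107, [4, 9, 86, 215, 24, 14, 3]),
   (109, [4, 9, 218, 17, 2]), (113, [2, 17, 227]), (127, [2, 19, 255]),
   (131, [2, 19, 53, 263, 59, 10, 5]), (137, [4, 11, 274, 21, 2]), (139, [2, 21, 278])]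

def tab15 : List (ℕ × List ℕ) :=
  [(4, [4, 5, 6, 3, 2, 3, 2, 3, 2, 3, 2, 3, 2, 3, 6, 5, 4]), (7, [2, 3, 2, 9, 4, 5, 6, 2, 15]),
   (11, [2, 3, 4, 2, 67]), (13, [2, 3, 26, 3, 2]), (17, [2, 3, 35, 3, 2]),
   (19, [2, 3, 9, 5, 8, 38, 3]), (23, [4, 3, 10, 2, 127, 47, 42, 2, 17, 2, 5]), (29, [2, 5, 58]),
   (31, [2, 5, 63]), (37, [4, 3, 27, 2, 314, 74, 20, 13, 22, 2, 5]), (41, [6, 3, 82, 7, 2]),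
   (43, [6, 3, 86, 6, 3]), (47, [6, 3, 95, 6, 3]), (53, [4, 5, 30, 106, 41, 3, 6]),
   (59, [2, 9, 118]), (61, [2, 9, 123]), (67, [4, 5, 39, 134, 6, 6, 3]),
   (71, [2, 11, 36, 143, 26, 4, 5]), (73, [2, 11, 72, 20, 146, 5, 69, 10, 3]),
   (79, [2, 11, 35, 5, 124, 158, 3]), (83, [6, 5, 72, 27, 126, 167, 13, 25, 72, 5, 6]),
   (89, [2, 13, 178]), (97, [6, 5, 85, 30, 144, 195, 12, 28, 85, 5, 6]),
   (101, [2, 15, 52, 19, 606]), (103, [2, 15, 102, 206, 17, 13, 2]), (107, [2, 15, 215, 15, 2]),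
   (109, [2, 15, 55, 219, 20, 17, 2]), (113, [4, 9, 64, 226, 11, 13, 2]),
   (127, [2, 17, 43, 6, 509, 60, 72, 8, 5]), (131, [6, 7, 262, 19, 2]), (137, [6, 7, 275, 18, 3]),
   (139, [6, 7, 279, 19, 2]), (149, [2, 21, 298])]

def tab16 : List (ℕ × List ℕ) :=
  [(5, [2, 3, 2, 3, 2, 3, 5, 6, 30]), (7, [2, 3, 2, 5, 28]), (9, [6, 7, 3, 2, 3, 19, 3]),
   (11, [2, 3, 4, 23, 3, 2, 5]), (13, [2, 3, 8, 4, 4, 13, 27, 2, 2, 4, 8, 3, 2]), (17, [2, 3, 35]),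
   (19, [2, 3, 13, 39, 6, 3, 4]), (23, [2, 3, 9, 4, 230]), (29, [4, 3, 58, 5, 2]),
   (31, [2, 5, 62]), (37, [4, 3, 31, 74, 20, 3, 6]), (41, [6, 3, 30, 2, 1477]),
   (43, [6, 3, 52, 87, 8, 4, 3]), (47, [2, 7, 94]), (53, [6, 3, 65, 107, 11, 3, 4]),
   (59, [2, 9, 20, 4, 118, 19, 48, 5, 4]), (61, [4, 5, 122, 9, 2]), (67, [4, 5, 135, 9, 2]),
   (71, [2, 9, 23, 10, 50, 142, 2]), (73, [2, 11, 22, 17, 584]), (79, [2, 11, 158]),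
   (83, [2, 11, 57, 32, 166, 5, 51, 11, 2]), (89, [6, 5, 80, 7, 2314]), (97, [2, 13, 195]),
   (101, [6, 5, 203, 7, 4]), (103, [6, 5, 89, 91, 207]),
   (107, [2, 15, 44, 23, 93, 214, 404, 5, 37, 14, 3]), (109, [2, 15, 74, 21, 219, 9, 76, 15, 2]),
   (113, [2, 15, 227]), (127, [2, 17, 254]), (131, [4, 9, 263, 17, 2]),
   (137, [6, 7, 114, 10, 3289]), (139, [2, 19, 60, 9, 278, 44, 166, 7, 6]),
   (149, [2, 19, 61, 298, 54, 11, 4]), (151, [6, 7, 131, 66, 604]), (157, [4, 11, 314, 21, 2])]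

def tab17 : List (ℕ × List ℕ) :=
  [(5, [2, 11, 2, 3, 2, 3, 2, 3, 2, 4, 5, 2, 6, 4, 3, 2, 2, 8, 10, 8, 2, 2, 3, 4, 6, 2, 5, 4, 2, 3, 2, 3, 2, 3, 2, 11, 2]),
   (6, [6, 3, 2, 5, 2, 4, 3, 2, 3, 2, 7]),
   (7, [2, 3, 2, 3, 3, 9, 14, 3, 2, 3, 14, 9, 3, 3, 2, 3, 2]), (8, [4, 8, 3, 2, 3]),
   (9, [2, 3, 2, 8, 4, 4, 12, 7, 4, 3, 6, 8, 2, 3, 2]), (11, [2, 3, 4, 22, 3, 2, 5]),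
   (13, [2, 3, 8, 3, 79]), (19, [2, 3, 39, 3, 2]), (23, [2, 3, 9, 46, 4, 5, 2]),
   (29, [2, 5, 12, 19, 59, 2, 8, 5, 2]), (31, [4, 3, 62, 5, 2]), (37, [4, 3, 75, 5, 2]),
   (41, [2, 5, 13, 82, 8, 7, 2]), (43, [6, 3, 32, 40, 22, 86, 4, 38, 32, 3, 6]),
   (47, [6, 3, 94, 7, 2]), (53, [6, 3, 107, 6, 3]), (59, [6, 3, 45, 119, 27, 4, 5]),
   (61, [2, 9, 16, 10, 304, 123, 155, 3, 29, 4, 5]), (67, [2, 9, 134]), (71, [4, 5, 143, 9, 2]),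
   (73, [4, 5, 59, 147, 13, 10, 3]), (79, [2, 11, 24, 8, 475, 57, 27, 10, 3]),
   (83, [2, 11, 82, 20, 166, 5, 79, 10, 3]), (89, [2, 11, 49, 6, 1247]), (97, [6, 5, 194, 7, 4]),
   (101, [2, 13, 202]), (103, [2, 13, 207]), (107, [6, 5, 215, 7, 4]),
   (109, [6, 5, 95, 218, 16, 9, 4]), (113, [2, 15, 38, 81, 678, 17, 37, 14, 3]),
   (127, [2, 15, 33, 254, 28, 17, 2]), (131, [4, 9, 106, 27, 524, 7, 110, 9, 4]),
   (137, [2, 17, 275]), (139, [4, 9, 279, 17, 2]), (149, [6, 7, 298, 19, 2]),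
   (151, [6, 7, 302, 18, 3]), (157, [6, 7, 315, 19, 2]), (163, [2, 21, 46, 326, 24, 8, 5]),
   (167, [4, 11, 334, 21, 2])]

def tab18 : List (ℕ × List ℕ) :=
  [(5, [2, 3, 2, 3, 2, 3, 2, 3, 2, 4, 3, 6, 3, 3, 3, 14, 12, 3, 20]), (7, [2, 3, 2, 3, 13, 2, 29]),
   (11, [2, 3, 2, 2, 18, 7, 23]), (13, [2, 3, 6, 26, 3, 2, 7]), (17, [2, 3, 34]), (19, [2, 3, 39]),
   (23, [2, 3, 11, 6, 14, 7, 138]), (29, [2, 5, 8, 24, 59, 2, 21, 2, 5]),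
   (31, [2, 5, 12, 63, 9, 2, 7]), (37, [2, 5, 75]), (41, [2, 5, 17, 25, 83, 2, 28, 2, 5]),
   (43, [2, 5, 13, 87, 8, 7, 2]), (47, [6, 3, 40, 36, 95, 7, 42, 3, 6]), (53, [2, 7, 106]),
   (59, [2, 7, 25, 118, 18, 5, 4]), (61, [6, 3, 53, 123, 23, 4, 5]),
   (67, [2, 9, 26, 18, 134, 4, 50, 5, 4]), (71, [2, 9, 142]), (73, [2, 9, 147]),
   (79, [4, 5, 49, 6, 158, 20, 47, 5, 4]), (83, [2, 11, 24, 167, 31, 5, 4]), (89, [2, 11, 178]),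
   (97, [2, 11, 29, 76, 41, 18, 583]), (101, [4, 7, 60, 11, 202, 17, 88, 5, 6]),
   (103, [6, 5, 206, 7, 4]), (107, [2, 13, 214]), (109, [2, 13, 219]), (113, [6, 5, 227, 7, 4]),
   (127, [2, 15, 255]), (131, [2, 15, 53, 263, 21, 16, 3]), (137, [4, 9, 78, 106, 54, 38, 548]),
   (139, [2, 17, 56, 79, 556, 7, 107, 8, 5]), (149, [2, 17, 55, 7, 298, 28, 118, 8, 5]),
   (151, [4, 9, 87, 302, 12, 14, 3]), (157, [6, 7, 188, 314, 24, 16, 3]), (163, [2, 19, 327]),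
   (167, [2, 19, 67, 47, 95, 27, 1670]), (173, [4, 11, 94, 8, 347, 35, 100, 11, 4]),
   (179, [2, 21, 358])]

def tab19 : List (ℕ × List ℕ) :=
  [(5, [6, 10, 3, 14, 3, 2, 3, 8, 3, 4, 3, 8, 3, 3, 2, 3, 2, 3, 2, 3, 2, 3, 2, 3, 2, 3, 4, 2, 13, 14, 87, 3, 2, 2, 10]),
   (6, [4, 18, 2, 3, 2, 3, 2, 3, 3, 3, 3, 2, 3, 19, 5]), (7, [2, 3, 2, 3, 6, 4, 28]),
   (8, [4, 9, 2, 3, 2, 5, 9]), (9, [2, 3, 2, 11, 4, 7, 2, 5, 8, 2, 19]),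
   (11, [2, 3, 4, 3, 16, 9, 23]), (13, [2, 3, 4, 27, 3, 2, 5]), (17, [2, 3, 34, 3, 2]),
   (23, [2, 3, 13, 46, 6, 3, 4]), (29, [4, 3, 16, 3, 162, 58, 55, 3, 11, 2, 5]),
   (31, [2, 5, 12, 3, 83, 3, 807]), (37, [2, 5, 74]), (41, [4, 3, 83, 5, 2]),
   (43, [4, 3, 35, 87, 7, 6, 3]), (47, [4, 3, 17, 3, 417, 4, 94, 24, 415, 3, 17, 3, 4]),
   (53, [6, 3, 106, 7, 2]), (59, [6, 3, 119, 6, 3]), (61, [6, 3, 123, 7, 2]),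
   (67, [4, 5, 30, 135, 41, 3, 6]), (71, [4, 5, 56, 143, 10, 5, 6]), (73, [4, 5, 146, 9, 2]),
   (79, [4, 5, 159, 9, 2]), (83, [2, 9, 23, 11, 167, 13, 47, 5, 4]),
   (89, [2, 11, 32, 9, 535, 56, 31, 10, 3]), (97, [2, 11, 99, 20, 195, 5, 102, 10, 3]),
   (101, [2, 11, 35, 203, 9, 9, 2]), (103, [2, 11, 27, 206, 56, 5, 6]),
   (107, [6, 5, 92, 215, 18, 10, 3]), (109, [6, 5, 218, 7, 4]), (113, [2, 13, 226]),
   (127, [2, 15, 42, 80, 762, 16, 45, 14, 3]), (131, [2, 15, 262, 15, 2]),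
   (137, [2, 15, 69, 274, 13, 13, 2]), (139, [2, 15, 47, 89, 1668, 9, 50, 14, 3]),
   (149, [4, 9, 298, 17, 2]), (151, [2, 17, 302]), (157, [4, 9, 127, 84, 314, 7, 121, 9, 4]),
   (163, [6, 7, 122, 138, 51, 10, 3912]), (167, [6, 7, 334, 19, 2]), (173, [6, 7, 347, 18, 3]),
   (179, [6, 7, 135, 151, 716, 10, 139, 7, 6]),
   (181, [4, 11, 80, 86, 141, 9, 724, 49, 145, 86, 80, 11, 4])]

def tab20 : List (ℕ × List ℕ) :=
  [(7, [2, 3, 2, 3, 2, 2, 5, 2, 7, 2, 25, 4, 2, 2, 2, 4, 3, 2, 6, 2, 13, 3, 18, 2, 14]),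
   (9, [6, 6, 3, 2, 3, 18, 3]), (11, [2, 3, 2, 6, 3, 23, 3]), (13, [2, 3, 4, 26, 3, 2, 5]),
   (17, [2, 3, 12, 7, 4, 35, 7, 3, 11, 2, 3]), (19, [2, 3, 38]),
   (23, [2, 3, 17, 6, 4, 4, 34, 5, 185]), (29, [2, 3, 7, 15, 6, 58, 3]),
   (31, [4, 3, 12, 4, 13, 63, 5]), (37, [4, 3, 74, 5, 2]), (41, [2, 5, 83]),
   (43, [4, 3, 87, 5, 2]), (47, [2, 5, 19, 2, 188, 16, 15, 5, 2]),
   (53, [6, 3, 48, 5, 107, 19, 46, 3, 6]), (59, [2, 7, 118]), (61, [2, 7, 123]),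
   (67, [2, 7, 27, 2, 269, 25, 58, 2, 7]), (71, [4, 5, 28, 4, 2273]),
   (73, [4, 5, 42, 53, 16, 66, 51, 12, 15, 146, 2]), (79, [2, 9, 158]), (83, [4, 5, 167, 9, 2]),
   (89, [4, 5, 41, 40, 356]), (97, [2, 11, 64, 30, 25, 8, 307, 16, 20, 195, 4]),
   (101, [2, 11, 203]), (103, [2, 11, 69, 207, 13, 12, 3]),
   (107, [6, 5, 44, 4, 833, 97, 643, 13, 834, 5, 45, 4, 7]), (109, [2, 11, 25, 219, 20, 13, 2]),
   (113, [4, 7, 66, 17, 226, 21, 98, 5, 6]), (127, [4, 7, 73, 45, 254, 8, 113, 5, 6]),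
   (131, [2, 15, 30, 31, 50, 263, 3]), (137, [2, 15, 92, 275, 17, 13, 2]), (139, [2, 15, 278]),
   (149, [4, 9, 54, 164, 299]), (151, [4, 9, 68, 35, 1208]), (157, [4, 9, 314, 17, 2]),
   (163, [4, 9, 327, 17, 2]), (167, [2, 17, 49, 116, 36, 30, 560, 11, 1671]),
   (173, [2, 19, 46, 10, 346, 121, 149, 6, 7]), (179, [2, 19, 358]), (181, [2, 19, 363]),
   (191, [2, 21, 42, 86, 765]), (193, [2, 21, 60, 9, 772, 137, 111, 10, 5]),
   (197, [4, 11, 394, 21, 2]), (199, [2, 21, 398])]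

def tab21 : List (ℕ × List ℕ) :=
  [(8, [2, 3, 2, 3, 80]), (10, [4, 10, 3, 2, 3]), (11, [2, 23, 3, 2, 3, 23, 3, 22, 2, 3, 2]),
   (13, [2, 3, 2, 2, 131]), (17, [2, 3, 8, 6, 6, 4, 68]), (19, [2, 3, 38, 3, 2]),
   (23, [2, 3, 47, 3, 2]), (25, [2, 3, 13, 51, 6, 3, 4]), (29, [2, 3, 11, 2, 638]),
   (31, [2, 3, 7, 31, 12, 62, 5, 29, 7, 3, 2]), (37, [4, 3, 30, 19, 149, 2, 26, 3, 4]),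
   (41, [2, 5, 82]), (43, [2, 5, 87]), (47, [4, 3, 39, 94, 7, 6, 3]),
   (53, [6, 3, 32, 51, 17, 3, 172, 106, 99, 3, 26, 50, 33, 2, 7]), (59, [6, 3, 118, 7, 2]),
   (61, [6, 3, 122, 6, 3]), (67, [6, 3, 135, 7, 2]), (71, [6, 3, 51, 5, 85, 142, 2]),
   (73, [6, 3, 45, 70, 37, 2, 310, 56, 293, 8, 313, 3, 36, 71, 44, 2, 7]),
   (79, [4, 5, 64, 158, 10, 5, 6]), (83, [2, 9, 166]), (89, [4, 5, 75, 6, 178, 15, 71, 5, 4]),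
   (97, [2, 11, 24, 194, 31, 5, 4]), (101, [2, 11, 50, 202, 13, 9, 2]),
   (103, [2, 11, 102, 207, 18, 7, 4]), (107, [2, 11, 109, 20, 215, 5, 112, 10, 3]),
   (109, [2, 11, 57, 14, 437, 6, 59, 11, 2]), (113, [2, 11, 31, 12, 72, 227, 3]),
   (127, [2, 13, 255]), (131, [6, 5, 263, 7, 4]),
   (137, [2, 15, 30, 11, 709, 7, 376, 274, 31, 11, 711, 11, 30, 15, 2]),
   (139, [2, 15, 34, 278, 10, 4, 5]), (149, [2, 15, 151, 299, 26, 6, 5]),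
   (151, [2, 15, 77, 303, 13, 13, 2]),
   (157, [2, 15, 33, 50, 189, 75, 41, 40, 629, 24, 38, 74, 188, 51, 32, 14, 3]),
   (163, [4, 9, 130, 78, 81, 327, 23, 19, 132, 9, 4]), (167, [2, 17, 334]),
   (173, [4, 9, 139, 83, 93, 6, 3807]), (179, [2, 19, 38, 17, 68, 359, 1217, 11, 105, 6, 7]),
   (181, [6, 7, 130, 6, 8327]), (191, [6, 7, 383, 18, 3]), (193, [6, 7, 387, 19, 2]),
   (197, [6, 7, 145, 11, 5911]), (199, [2, 19, 41, 398, 36, 21, 2])]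

def tab22 : List (ℕ × List ℕ) :=
  [(7, [2, 3, 2, 3, 2, 5, 2, 3, 6, 86, 15]), (9, [6, 7, 2, 3, 2, 5, 6, 2, 9, 2, 36]),
   (13, [2, 3, 4, 3, 17, 27, 2, 3, 6, 3, 2]), (15, [6, 11, 5, 2, 3]), (17, [2, 3, 6, 35, 3, 2, 7]),
   (19, [2, 3, 12, 6, 5, 39, 6, 2, 15, 2, 3]), (23, [2, 3, 47]),
   (25, [2, 3, 21, 11, 3, 2, 51, 2, 21, 3, 2]), (29, [2, 3, 9, 59, 4, 5, 2]),
   (31, [2, 3, 7, 62, 3, 2, 6]), (37, [4, 3, 22, 9, 44, 74, 49, 3, 19, 2, 5]),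
   (41, [4, 3, 82, 5, 2]), (43, [2, 5, 86]), (47, [4, 3, 95, 5, 2]),
   (53, [4, 3, 25, 22, 31, 35, 40, 3, 151, 6, 424]),
   (59, [6, 3, 56, 3, 448, 118, 15, 19, 51, 2, 7]), (61, [6, 3, 76, 5, 366, 15, 74, 3, 6]),
   (67, [2, 7, 135]), (71, [6, 3, 87, 16, 285, 5, 83, 3, 6]),
   (73, [2, 7, 15, 3, 206, 146, 673, 3, 57, 3, 6]),
   (79, [4, 5, 36, 17, 91, 51, 53, 159, 109, 4, 95, 17, 36, 5, 4]),
   (83, [4, 5, 66, 38, 57, 22, 24, 167, 23, 12, 54, 39, 67, 4, 5]), (89, [2, 9, 179]),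
   (97, [2, 9, 23, 40, 195, 16, 42, 4, 5]), (101, [4, 5, 33, 20, 404, 7, 29, 5, 4]),
   (103, [2, 9, 15, 70, 82, 206, 195, 5, 34, 11, 2]),
   (107, [2, 11, 72, 31, 24, 89, 38, 4, 428, 24, 42, 89, 24, 31, 72, 11, 2]), (109, [2, 11, 218]),
   (113, [2, 11, 77, 226, 13, 12, 3]), (127, [6, 5, 254, 7, 4]), (131, [2, 13, 262]),
   (137, [6, 5, 275, 7, 4]), (139, [6, 5, 119, 23, 835, 9, 117, 5, 6]),
   (149, [2, 15, 60, 298, 22, 9, 4]), (151, [2, 15, 100, 302, 17, 13, 2]),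
   (157, [2, 15, 101, 7, 245, 315, 25, 44, 104, 14, 3]), (163, [2, 15, 37, 327, 51, 8, 5]),
   (167, [4, 9, 74, 136, 48, 107, 113, 46, 69, 334, 23, 11, 114, 106, 49, 137, 75, 8, 5]),
   (173, [4, 9, 346, 17, 2]), (179, [4, 9, 359, 17, 2]), (181, [2, 17, 73, 363, 64, 7, 6]),
   (191, [2, 19, 56, 25, 383, 11, 58, 19, 2]), (193, [6, 7, 232, 89, 387, 22, 230, 7, 6]),
   (197, [2, 19, 394]), (199, [2, 19, 399]), (211, [4, 11, 94, 173, 61, 423, 29, 174, 95, 10, 5])]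

def tab23 : List (ℕ × List ℕ) :=
  [(6, [6, 4, 3, 13, 2, 2, 6, 3, 3, 2, 7, 2, 3, 2, 3, 2, 3, 2, 3, 2, 3, 2, 3, 2, 3, 22, 3, 3, 2, 3, 9, 8, 6, 3, 12]),
   (7, [2, 3, 2, 3, 2, 3, 6, 4, 19, 2, 3, 18, 5, 2, 2, 2, 3, 3, 7, 2, 5, 2, 3, 3, 2, 7, 3, 3, 183, 3, 3, 7, 2, 3, 3, 2, 5, 2, 7, 3, 3, 2, 2, 2, 5, 18, 3, 2, 19, 4, 6, 3, 2, 3, 2, 3, 2]),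
   (8, [2, 3, 2, 3, 2, 2, 15, 13, 8]), (9, [6, 6, 2, 3, 2, 3, 36]), (10, [4, 3, 2, 3, 40]),
   (11, [2, 3, 2, 13, 4, 7, 8, 3, 3, 11, 4, 6, 3, 4, 4, 22, 6, 4, 2, 4, 4, 11, 3, 3, 8, 7, 4, 13, 2, 3, 2]),
   (13, [2, 3, 2, 4, 11, 10, 3, 7, 11, 7, 6, 4, 4, 6, 4, 3, 131, 3, 4, 6, 4, 4, 6, 7, 11, 7, 3, 10, 11, 4, 2, 3, 2]),
   (15, [6, 10, 5, 2, 3]),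
   (17, [2, 3, 6, 9, 3, 3, 29, 2, 31, 12, 35, 12, 31, 2, 29, 3, 3, 9, 6, 3, 2]),
   (19, [2, 3, 8, 2, 16, 12, 38, 3, 18, 2, 8, 3, 2]), (25, [2, 3, 51, 3, 2]),
   (29, [2, 3, 11, 16, 7, 26, 5, 3, 81, 20, 58, 20, 81, 3, 5, 26, 7, 16, 11, 3, 2]),
   (31, [2, 3, 9, 62, 4, 5, 2]),
   (37, [2, 5, 8, 28, 10, 3, 190, 22, 12, 74, 26, 5, 192, 3, 10, 28, 8, 5, 2]),
   (41, [4, 3, 34, 7, 246, 7, 34, 3, 4]), (43, [4, 3, 86, 5, 2]), (47, [2, 5, 95]),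
   (53, [4, 3, 31, 107, 20, 3, 6]), (59, [2, 7, 12, 119, 19, 3, 4]),
   (61, [6, 3, 46, 123, 9, 5, 2]), (67, [6, 3, 134, 6, 3]), (71, [6, 3, 143, 6, 3]),
   (73, [6, 3, 147, 7, 2]), (79, [2, 7, 17, 158, 12, 9, 2]),
   (83, [2, 9, 18, 32, 30, 166, 152, 7, 17, 8, 3]), (89, [4, 5, 178, 9, 2]),
   (97, [4, 5, 79, 42, 194, 42, 79, 5, 4]), (101, [2, 9, 19, 5, 404, 41, 23, 9, 2]),
   (103, [2, 9, 21, 14, 240, 54, 69, 207, 134, 4, 236, 14, 21, 9, 2]),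
   (107, [2, 9, 15, 71, 86, 215, 226, 5, 23, 10, 3]),
   (109, [2, 11, 36, 56, 22, 95, 25, 87, 32, 5, 4142, 5, 32, 87, 25, 95, 22, 56, 36, 11, 2]),
   (113, [2, 11, 112, 227, 19, 6, 5]), (127, [4, 7, 46, 122, 43, 255, 225, 9, 72, 5, 6]),
   (131, [6, 5, 112, 80, 1835, 4, 119, 4, 7]), (137, [2, 13, 274]), (139, [2, 13, 279]),
   (149, [4, 7, 55, 145, 299, 8, 78, 4, 7]), (151, [2, 15, 30, 132, 39, 302, 20, 130, 30, 15, 2]),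
   (157, [2, 15, 74, 6, 404, 97, 315, 16, 402, 6, 74, 15, 2]), (163, [2, 15, 165, 327, 27, 7, 4]),
   (167, [2, 15, 57, 88, 334, 9, 53, 15, 2]),
   (173, [2, 15, 29, 37, 289, 91, 693, 19, 290, 36, 28, 14, 3]),
   (179, [4, 9, 142, 26, 1790, 7, 139, 8, 5]), (181, [4, 9, 362, 17, 2]),
   (191, [2, 17, 55, 59, 255, 51, 1146, 11, 258, 58, 54, 16, 3]),
   (193, [4, 9, 87, 387, 13, 15, 2]), (197, [6, 7, 118, 394, 2, 17, 394, 170, 118, 7, 6]),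
   (199, [2, 19, 44, 6, 1592, 47, 150, 7, 6]), (211, [6, 7, 423, 19, 2]),
   (223, [4, 11, 128, 69, 298, 59, 447, 59, 298, 69, 128, 11, 4]), (227, [4, 11, 454, 21, 2]),
   (229, [2, 21, 458])]

def tab24 : List (ℕ × List ℕ) :=
  [(7, [2, 15, 7, 2, 3, 2, 3, 2, 3, 2, 10, 3, 14, 2, 15]), (11, [2, 3, 2, 7, 44]),
   (13, [2, 3, 2, 6, 53]), (17, [2, 3, 6, 3, 7, 34, 3]), (19, [2, 3, 6, 2, 153]), (23, [2, 3, 46]),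
   (25, [2, 3, 51]), (29, [2, 3, 13, 58, 6, 3, 4]), (31, [2, 3, 11, 4, 10, 63, 3]),
   (37, [2, 3, 7, 74, 2, 7, 2]), (41, [4, 3, 20, 2, 985]), (43, [4, 3, 38, 3, 774]),
   (47, [2, 5, 94]), (53, [4, 3, 43, 23, 107]), (59, [4, 3, 23, 18, 354]),
   (61, [6, 3, 32, 8, 855]), (67, [6, 3, 86, 3, 1876]), (71, [2, 7, 142]), (73, [2, 7, 147]),
   (79, [6, 3, 69, 46, 158]), (83, [6, 3, 45, 11, 17, 166, 6]), (89, [2, 9, 26, 27, 356]),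
   (97, [2, 9, 195]), (101, [4, 5, 83, 14, 606]), (103, [4, 5, 63, 6, 33, 206, 7]),
   (107, [2, 11, 16, 38, 28, 215, 2]), (109, [2, 11, 18, 10, 2181]), (113, [2, 11, 32, 66, 227]),
   (127, [2, 11, 37, 255, 30, 7, 4]), (131, [2, 11, 23, 13, 2621]), (137, [6, 5, 116, 16, 1371]),
   (139, [6, 5, 278, 7, 4]), (149, [6, 5, 299, 7, 4]), (151, [6, 5, 131, 44, 604]),
   (157, [2, 15, 30, 19, 2512]), (163, [2, 15, 66, 35, 652]), (167, [2, 15, 334]),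
   (173, [2, 15, 69, 25, 1039]), (179, [4, 9, 52, 10, 99, 359, 7]),
   (181, [4, 9, 62, 8, 305, 363, 3]), (191, [2, 17, 382]), (193, [2, 17, 387]),
   (197, [4, 9, 159, 82, 394]), (199, [4, 9, 115, 116, 398]), (211, [6, 7, 254, 45, 844]),
   (223, [2, 19, 61, 11, 5799]), (227, [6, 7, 125, 454, 71, 10, 5]), (229, [4, 11, 82, 30, 3207]),
   (233, [4, 11, 132, 34, 1865]), (239, [2, 21, 478])]

def tab25 : List (ℕ × List ℕ) :=
  [(7, [2, 3, 2, 3, 2, 3, 2, 3, 4, 3, 25, 3, 2, 3, 2, 7, 9, 3, 6, 3, 2, 3, 6, 43, 7, 2, 3, 2, 2, 3, 2, 28, 6]),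
   (8, [2, 3, 2, 3, 2, 5, 2, 45, 9]), (9, [2, 3, 2, 3, 4, 24, 3, 2, 3, 26, 2, 6, 7]),
   (11, [2, 3, 2, 5, 17, 5, 4, 7, 2, 4, 45]), (12, [4, 12, 3, 2, 3]),
   (13, [2, 3, 2, 12, 4, 6, 8, 2, 2, 15, 5, 8, 5, 2, 17, 27, 7, 3, 3, 8, 5, 15, 2, 2, 8, 6, 4, 12, 2, 3, 2]),
   (17, [2, 3, 4, 35, 3, 2, 5]), (19, [2, 3, 6, 10, 3, 3, 35, 14, 9, 3, 115]),
   (23, [2, 3, 46, 3, 2]), (29, [2, 3, 13, 3, 30, 2, 58, 20, 32, 3, 13, 3, 2]),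
   (31, [2, 3, 9, 3, 43, 2, 95, 3, 171, 63, 6, 13, 97, 2, 43, 3, 9, 3, 2]),
   (37, [2, 3, 7, 37, 14, 75, 9, 3, 5, 3, 2]),
   (41, [4, 3, 18, 30, 15, 20, 82, 5, 13, 30, 18, 3, 4]), (43, [4, 3, 28, 3, 1033]),
   (47, [4, 3, 94, 5, 2]), (53, [4, 3, 107, 5, 2]), (59, [4, 3, 27, 119, 23, 2, 7]),
   (61, [4, 3, 23, 123, 27, 2, 7]), (67, [6, 3, 50, 134, 9, 5, 2]), (71, [6, 3, 142, 7, 2]),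
   (73, [6, 3, 146, 6, 3]), (79, [6, 3, 159, 7, 2]), (83, [6, 3, 63, 166, 10, 2, 5]),
   (89, [4, 5, 30, 6, 578, 28, 179, 5, 582, 6, 30, 5, 4]), (97, [4, 5, 194, 9, 2]),
   (101, [2, 9, 203]), (103, [4, 5, 207, 9, 2]), (107, [4, 5, 63, 20, 643]),
   (109, [2, 9, 25, 81, 219, 4, 44, 4, 5]),
   (113, [2, 11, 18, 22, 65, 4, 3245, 4, 145, 226, 16, 26, 3241, 4, 65, 22, 18, 11, 2]),
   (127, [2, 11, 129, 20, 255, 5, 132, 10, 3]),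
   (131, [2, 11, 45, 64, 25, 4, 607, 263, 32, 31, 19, 64, 45, 11, 2]),
   (137, [4, 7, 42, 144, 275, 8, 67, 4, 7]), (139, [6, 5, 76, 279, 20, 10, 3]),
   (149, [2, 13, 298]), (151, [2, 13, 303]), (157, [6, 5, 135, 45, 628]),
   (163, [6, 5, 77, 34, 271, 327, 22, 20, 74, 4, 7]),
   (167, [2, 15, 44, 13, 208, 4, 1311, 335, 37, 5, 36, 106, 43, 14, 3]),
   (173, [2, 15, 172, 346, 30, 6, 5]), (179, [2, 15, 91, 358, 34, 9, 4]),
   (181, [2, 15, 61, 363, 39, 8, 5]), (191, [4, 9, 90, 7, 1464, 92, 97, 62, 37, 24, 2674]),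
   (193, [4, 9, 112, 19, 2317]), (197, [4, 9, 394, 17, 2]), (199, [2, 17, 398]),
   (211, [2, 17, 45, 6, 3271, 69, 70, 102, 845, 6, 77, 68, 3270, 7, 44, 16, 3]),
   (223, [6, 7, 446, 18, 3]), (227, [6, 7, 455, 18, 3]), (229, [6, 7, 459, 19, 2]),
   (233, [2, 19, 53, 7, 932, 50, 174, 6, 7]),
   (239, [4, 11, 86, 42, 598, 77, 87, 6, 956, 115, 80, 76, 599, 43, 87, 10, 5]),
   (241, [2, 21, 60, 7, 2330, 482, 342, 9, 112, 11, 4])]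

def tab26 : List (ℕ × List ℕ) :=
  [(7, [2, 14, 2, 3, 2, 3, 2, 3, 2, 3, 2, 3, 2, 2, 6, 6, 7, 7, 2, 4, 3, 3, 2, 19, 3, 3, 3, 5, 7, 5, 3, 2, 3, 15, 3]),
   (9, [2, 3, 2, 3, 2, 2, 6, 7, 13]), (11, [4, 3, 2, 3, 10, 7, 27, 5, 9, 2, 4, 3, 66]),
   (15, [6, 3, 3, 2, 3, 10, 3]), (17, [2, 3, 4, 34, 3, 2, 5]), (19, [2, 3, 6, 38, 3, 2, 7]),
   (23, [2, 3, 16, 7, 6, 5, 184]), (25, [2, 3, 50]), (29, [2, 3, 21, 6, 6, 10, 116]),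
   (31, [2, 3, 13, 63, 6, 3, 4]), (37, [2, 3, 7, 74, 3, 2, 6]),
   (41, [4, 3, 18, 3, 159, 2, 230, 17, 83, 4, 228, 2, 159, 3, 18, 3, 4]),
   (43, [4, 3, 18, 6, 141, 3, 430]), (47, [4, 3, 34, 2, 846]), (53, [2, 5, 107]),
   (59, [4, 3, 37, 4, 355, 32, 35, 3, 4]), (61, [2, 5, 13, 7, 289, 4, 9, 122, 7]),
   (67, [2, 7, 12, 134, 19, 3, 4]), (71, [2, 7, 20, 38, 46, 8, 284, 2, 42, 38, 20, 7, 2]),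
   (73, [6, 3, 82, 2, 2044]), (79, [2, 7, 159]), (83, [6, 3, 99, 9, 664]),
   (89, [6, 3, 53, 4, 377, 62, 37, 179, 46, 9, 375, 4, 53, 3, 6]),
   (97, [4, 5, 56, 27, 129, 195, 8, 29, 56, 5, 4]), (101, [4, 5, 202, 9, 2]), (103, [2, 9, 206]),
   (107, [4, 5, 215, 9, 2]), (109, [4, 5, 85, 7, 22, 218, 6]),
   (113, [4, 5, 51, 79, 75, 15, 18, 226, 3]), (127, [2, 11, 84, 254, 22, 4, 5]),
   (131, [2, 11, 263]), (137, [6, 5, 38, 4, 4568, 17, 548, 5, 4572, 4, 38, 5, 6]),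
   (139, [2, 11, 31, 25, 377, 4, 2224]), (149, [6, 5, 128, 81, 2087, 5, 123, 4, 7]),
   (151, [6, 5, 302, 7, 4]), (157, [2, 13, 315]), (163, [6, 5, 147, 4, 2283, 89, 140, 4, 7]),
   (167, [2, 15, 18, 6, 1194, 5, 1938, 33, 668, 8, 1934, 5, 1194, 6, 18, 15, 2]),
   (173, [2, 15, 34, 6, 2077, 61, 39, 14, 3]), (179, [2, 15, 124, 7, 282, 9, 108, 358, 4]),
   (181, [2, 15, 362]), (191, [2, 15, 41, 13, 1147, 66, 42, 14, 3]),
   (193, [2, 17, 22, 8, 637, 126, 154, 74, 128, 44, 54, 26, 1545]),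
   (197, [2, 17, 36, 394, 33, 6, 7]), (199, [2, 17, 44, 138, 139, 6, 119, 398, 2]),
   (211, [4, 9, 423, 17, 2]), (223, [2, 17, 25, 7, 2230, 94, 123, 6, 7]),
   (227, [6, 7, 194, 454, 10, 14, 3]), (229, [6, 7, 276, 29, 27, 458, 4]), (233, [2, 19, 466]),
   (239, [6, 7, 287, 47, 956]), (241, [6, 7, 209, 26, 805, 482, 43, 65, 207, 7, 6]),
   (251, [4, 11, 118, 7, 4852, 58, 503]), (257, [4, 11, 514, 21, 2])]

def tab27 : List (ℕ × List ℕ) :=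
  [(7, [4, 14, 5, 15, 7, 15, 2, 3, 2, 3, 2, 3, 2, 3, 2, 3, 2, 3, 2, 3, 2, 5, 2, 3, 4, 7, 13, 7, 3, 4, 3, 2, 9, 2, 29, 5, 3, 34, 3, 2, 3, 6, 3, 2, 2, 3, 35, 2, 2, 5, 15, 5, 2, 2, 35, 3, 2, 2, 3, 6, 3, 2, 3, 34, 3, 5, 29, 2, 9, 2, 3, 4, 3, 7, 13, 7, 4, 3, 2, 5, 2, 3, 2, 3, 2, 3, 2, 3, 2, 3, 2, 3, 2, 3, 2, 15, 7, 15, 5, 14, 4]),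
   (8, [6, 9, 5, 4, 3, 2, 3, 2, 3, 2, 5, 21, 8]), (10, [4, 3, 2, 3, 2, 6, 3, 2, 61]),
   (11, [2, 3, 2, 3, 3, 3, 5, 9, 2, 2, 11, 7, 3, 23, 4, 3, 2, 3, 6, 3, 24, 7, 3, 27, 23]),
   (13, [2, 27, 2, 3, 2, 27, 3, 26, 3, 2, 3]), (17, [2, 3, 4, 5, 15, 2, 170]),
   (19, [2, 3, 4, 4, 11, 3, 267]), (23, [2, 3, 10, 2, 12, 6, 14, 46, 11, 3, 14, 2, 10, 3, 2]),
   (25, [2, 3, 50, 3, 2]), (29, [2, 3, 59, 3, 2]), (31, [2, 3, 19, 2, 29, 63, 4, 8, 17, 3, 2]),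
   (37, [2, 3, 7, 5, 64, 8, 9, 74, 2]),
   (41, [4, 3, 12, 10, 51, 2, 91, 31, 19, 4, 31, 34, 11, 25, 21, 13, 165, 5, 22, 24, 10, 35, 30, 5, 18, 30, 90, 3, 50, 11, 13, 2, 5]),
   (43, [4, 3, 16, 19, 10, 2, 227, 86, 18, 10, 6, 37, 8, 5, 2]),
   (47, [4, 3, 26, 8, 56, 18, 94, 3, 60, 8, 26, 3, 4]), (53, [2, 5, 106]),
   (59, [2, 5, 25, 118, 16, 3, 6]), (61, [2, 5, 23, 2, 489, 8, 37, 3, 4]),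
   (67, [6, 3, 28, 14, 135, 33, 11, 5, 2]), (71, [6, 3, 40, 4, 236, 3, 2983]),
   (73, [2, 7, 18, 44, 146, 5, 53, 2, 7]), (79, [6, 3, 158, 6, 3]), (83, [6, 3, 167, 6, 3]),
   (89, [2, 7, 23, 53, 19, 66, 179]), (97, [2, 9, 18, 41, 30, 195, 181, 7, 20, 9, 2]),
   (101, [4, 5, 58, 203, 11, 7, 2]), (103, [4, 5, 82, 206, 28, 2, 7]), (107, [2, 9, 214]),
   (109, [2, 9, 219]), (113, [4, 5, 91, 43, 226, 43, 91, 5, 4]),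
   (127, [2, 11, 32, 75, 15, 21, 2032]), (131, [2, 11, 66, 39, 25, 262, 83, 8, 69, 10, 3]),
   (137, [2, 11, 139, 20, 275, 5, 142, 10, 3]), (139, [2, 11, 71, 278, 12, 13, 2]),
   (149, [6, 5, 70, 19, 340, 38, 299, 5, 346, 19, 70, 5, 6]),
   (151, [6, 5, 82, 62, 47, 302, 16, 27, 55, 6, 5]), (157, [6, 5, 314, 7, 4]), (163, [2, 13, 327]),
   (167, [6, 5, 335, 7, 4]), (173, [6, 5, 95, 347, 17, 8, 5]), (179, [2, 15, 36, 359, 43, 7, 4]),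
   (181, [2, 15, 46, 363, 10, 4, 5]), (191, [2, 15, 383, 15, 2]),
   (193, [2, 15, 97, 57, 25, 229, 39, 49, 82, 40, 1930, 40, 82, 49, 39, 229, 25, 57, 97, 15, 2]),
   (197, [2, 395, 3, 14, 560, 277, 25, 36, 53, 789, 2]), (199, [2, 15, 41, 148, 51, 118, 399]),
   (211, [4, 9, 170, 27, 2110, 6, 175, 8, 5]), (223, [4, 9, 129, 447, 22, 4, 7]),
   (227, [6, 7, 84, 30, 455, 47, 42, 16, 3]),
   (229, [4, 9, 73, 22, 654, 118, 46, 459, 405, 8, 650, 22, 73, 9, 4]),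
   (233, [6, 7, 140, 173, 65, 6, 10718]), (239, [6, 7, 478, 19, 2]), (241, [6, 7, 482, 18, 3]),
   (251, [6, 7, 189, 149, 51, 187, 502]), (257, [2, 19, 33, 9, 515, 265, 111, 7, 6]),
   (263, [2, 21, 72, 12, 98, 526, 106, 136, 150, 11, 4]), (269, [2, 21, 538])]

def tab28 : List (ℕ × List ℕ) :=
  [(9, [6, 6, 6, 2, 7, 2, 3, 2, 3, 2, 9, 43, 6]),
   (11, [2, 3, 2, 3, 9, 2, 5, 2, 7, 23, 3, 2, 3, 2, 36, 2, 4, 22, 3, 2, 39, 3, 2, 3, 2, 22, 6, 3, 4, 3, 8, 2, 3, 2, 3]),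
   (13, [2, 3, 2, 7, 3, 26, 3]), (15, [6, 11, 3, 2, 3, 31, 3]),
   (17, [2, 3, 2, 2, 12, 3, 32, 5, 46, 5, 8, 3, 103]), (19, [2, 3, 4, 39, 3, 2, 5]),
   (23, [2, 3, 10, 5, 31, 5, 3, 3, 25, 17, 10, 3, 415]), (25, [2, 3, 16, 6, 5, 3, 13, 51, 3]),
   (29, [2, 3, 59]), (31, [2, 3, 21, 7, 9, 4, 311]), (37, [2, 3, 9, 75, 4, 5, 2]),
   (41, [2, 3, 7, 21, 6, 82, 3]), (43, [4, 3, 14, 9, 430]), (47, [4, 3, 22, 7, 161, 2, 470]),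
   (53, [4, 3, 106, 5, 2]), (59, [4, 3, 119, 5, 2]), (61, [2, 5, 25, 123, 16, 3, 6]),
   (67, [4, 3, 23, 5, 197, 4, 135, 22, 195, 5, 23, 3, 4]), (71, [6, 3, 34, 9, 43, 143, 2]),
   (73, [6, 3, 40, 59, 16, 46, 6, 2, 1657, 8, 293, 2, 1661, 2, 6, 46, 16, 59, 40, 3, 6]),
   (79, [6, 3, 92, 4, 474, 14, 94, 3, 6]), (83, [2, 7, 166]),
   (89, [6, 3, 107, 17, 357, 4, 111, 3, 6]), (97, [6, 3, 49, 4, 48, 195, 7]),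
   (101, [2, 9, 18, 40, 404, 5, 22, 9, 2]), (103, [4, 5, 46, 67, 69, 207, 141, 4, 42, 5, 4]),
   (107, [4, 5, 86, 215, 28, 2, 7]), (109, [4, 5, 218, 9, 2]), (113, [2, 9, 227]),
   (127, [4, 5, 35, 136, 254]), (131, [2, 11, 26, 6, 1224, 15, 525]),
   (137, [2, 11, 92, 275, 22, 4, 5]), (139, [2, 11, 278]), (149, [2, 11, 35, 24, 393, 5, 2384]),
   (151, [6, 5, 56, 9, 772, 99, 24, 29, 503, 17, 605, 5, 499, 29, 24, 99, 772, 9, 56, 5, 6]),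
   (157, [6, 5, 80, 4, 1077, 5, 629, 101, 70, 63, 86, 5, 6]), (163, [6, 5, 326, 7, 4]),
   (167, [2, 13, 334]), (173, [6, 5, 347, 7, 4]), (179, [6, 5, 99, 358, 17, 8, 5]),
   (181, [6, 5, 85, 56, 1086]), (191, [2, 15, 76, 68, 130, 382, 21, 11, 75, 14, 3]),
   (193, [2, 15, 124, 6, 301, 125, 387]), (197, [2, 15, 395]), (199, [2, 15, 133, 399, 16, 17, 2]),
   (211, [4, 9, 68, 11, 148, 422, 4]), (223, [2, 17, 446]), (227, [4, 9, 455, 17, 2]),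
   (229, [2, 17, 93, 458, 21, 18, 3]), (233, [4, 9, 99, 7, 3878, 6, 138, 466, 3]),
   (239, [6, 7, 116, 7, 17686]), (241, [2, 19, 44, 191, 965, 10, 128, 7, 6]), (251, [2, 19, 502]),
   (257, [2, 19, 103, 47, 514, 93, 309, 7, 6]), (263, [2, 19, 49, 526, 63, 10, 5]),
   (269, [4, 11, 98, 213, 60, 175, 32, 10, 539, 62, 43, 173, 60, 213, 98, 11, 4]),
   (271, [4, 11, 114, 6, 5240, 61, 20, 542, 3]), (277, [4, 11, 554, 21, 2])]

def tab29 : List (ℕ × List ℕ) :=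
  [(8, [2, 16, 4, 17, 3, 3, 2, 3, 2, 3, 2, 3, 2, 3, 4, 3, 6, 3, 2, 10, 2, 3, 4, 3, 2, 3, 4, 20, 153]),
   (9, [2, 3, 2, 3, 2, 3, 9, 14, 10, 4, 4, 5, 2, 3, 73]),
   (10, [4, 31, 7, 3, 3, 2, 3, 2, 3, 36, 3, 4, 10]),
   (11, [2, 3, 2, 3, 30, 2, 15, 22, 2, 3, 32, 3, 2, 3, 2]),
   (12, [4, 5, 6, 2, 6, 2, 3, 2, 3, 5, 13]),
   (13, [2, 3, 2, 5, 3, 7, 19, 5, 2, 22, 4, 6, 3, 3, 105]), (14, [4, 14, 3, 2, 3]),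
   (15, [6, 3, 2, 5, 2, 7, 11]), (17, [2, 3, 4, 3, 239]), (19, [2, 3, 4, 38, 3, 2, 5]),
   (21, [2, 3, 6, 5, 42, 5, 6, 3, 2]),
   (23, [2, 3, 8, 11, 8, 3, 17, 2, 67, 46, 2, 11, 15, 3, 8, 11, 8, 3, 2]),
   (25, [2, 3, 10, 10, 3, 2, 22, 16, 50, 3, 24, 2, 3, 10, 10, 3, 2]), (31, [2, 3, 63, 3, 2]),
   (35, [2, 3, 13, 70, 6, 3, 4]),
   (37, [2, 3, 9, 5, 63, 16, 11, 2, 141, 2, 333, 74, 13, 4, 136, 3, 10, 17, 62, 4, 8, 2, 3]),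
   (41, [2, 3, 5, 3, 1394]), (43, [2, 3, 7, 43, 12, 86, 5, 41, 7, 3, 2]),
   (47, [4, 3, 16, 6, 117, 94, 2, 4, 19, 2, 5]), (49, [4, 3, 22, 31, 17, 99, 35, 4, 20, 3, 4]),
   (53, [4, 3, 42, 18, 213, 3, 46, 3, 4]), (59, [2, 5, 119]), (61, [4, 3, 123, 5, 2]),
   (67, [4, 3, 31, 134, 20, 3, 6]), (71, [4, 3, 23, 64, 29, 143, 6, 62, 23, 3, 4]),
   (73, [6, 3, 32, 15, 105, 37, 14, 15, 70, 3, 334, 146, 4, 4, 112, 9, 13, 36, 104, 14, 33, 2, 7]),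
   (79, [2, 7, 18, 6, 48, 158, 291, 4, 63, 2, 7]), (83, [6, 3, 166, 7, 2]),
   (89, [6, 3, 179, 6, 3]), (97, [6, 3, 59, 194, 11, 3, 4]),
   (101, [4, 5, 20, 2, 1504, 5, 221, 39, 39, 3, 627, 71, 40, 34, 18, 13, 236, 203, 361, 3, 11, 35, 41, 70, 626, 2, 38, 38, 220, 4, 1505, 3, 21, 4, 5]),
   (103, [4, 5, 32, 47, 81, 7, 206, 37, 83, 47, 32, 5, 4]),
   (107, [4, 5, 50, 7, 393, 45, 643, 5, 396, 6, 51, 4, 5]), (109, [4, 5, 62, 218, 11, 7, 2]),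
   (113, [4, 5, 226, 9, 2]), (127, [4, 5, 47, 255, 15, 10, 3]),
   (131, [2, 11, 20, 15, 337, 263, 109, 4, 14, 11, 2]), (137, [2, 11, 34, 274, 26, 4, 5]),
   (139, [2, 11, 46, 278, 12, 8, 3]), (149, [2, 11, 75, 299, 12, 13, 2]),
   (151, [2, 11, 51, 63, 39, 5, 419, 137, 34, 47, 303, 5, 63, 68, 71, 25, 44, 62, 50, 10, 3]),
   (157, [2, 11, 27, 131, 314]), (163, [2, 13, 30, 63, 132, 15, 1957, 5, 136, 63, 30, 13, 2]),
   (167, [4, 7, 94, 16, 334, 20, 142, 5, 6]), (173, [2, 13, 346]), (179, [6, 5, 359, 7, 4]),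
   (181, [4, 7, 105, 44, 362, 9, 153, 5, 6]), (191, [2, 15, 32, 159, 383]),
   (193, [2, 15, 32, 4, 796, 212, 28, 63, 237, 6, 386, 23, 2393, 7, 32, 212, 796, 4, 32, 15, 2]),
   (197, [2, 15, 66, 83, 56, 394, 19, 81, 66, 15, 2]), (199, [2, 15, 100, 399, 16, 12, 3]),
   (211, [2, 17, 20, 306, 71, 89, 423, 8, 75, 306, 20, 17, 2]),
   (223, [4, 9, 94, 6, 1710, 93, 113, 62, 65, 108, 446, 19, 63, 62, 113, 93, 1710, 6, 94, 9, 4]),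
   (227, [4, 9, 182, 454, 40, 7, 6]), (229, [4, 9, 458, 17, 2]), (233, [2, 17, 467]),
   (239, [4, 9, 137, 478, 22, 4, 7]),
   (241, [4, 9, 107, 31, 402, 101, 483, 20, 400, 31, 107, 9, 4]),
   (251, [2, 19, 56, 7, 1004, 58, 150, 7, 6]), (257, [6, 7, 514, 19, 2]),
   (263, [6, 7, 527, 18, 3]),
   (269, [6, 7, 203, 148, 92, 17, 376, 62, 233, 26, 2691, 26, 233, 62, 376, 17, 92, 148, 203, 7, 6]),
   (271, [2, 19, 55, 187, 49, 6, 543, 82, 1292, 6, 48, 18, 3]),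
   (277, [4, 11, 90, 9, 3431, 9, 1108, 49, 3435, 9, 90, 11, 4]),
   (281, [2, 21, 56, 6, 2716, 116, 142, 562, 69, 11, 2720, 6, 56, 21, 2]),
   (283, [2, 21, 76, 8, 1132, 136, 163, 10, 5])]

def tab30 : List (ℕ × List ℕ) :=
  [(11, [2, 3, 2, 3, 6, 5, 3, 3, 11, 22, 2]), (13, [2, 3, 2, 5, 6, 5, 2, 4, 11, 27, 3]),
   (17, [2, 3, 2, 4, 7, 3, 54, 5, 68]), (19, [2, 3, 4, 5, 5, 38, 3]), (23, [2, 3, 6, 47, 3, 2, 7]),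
   (29, [2, 3, 58]), (31, [2, 3, 63]), (37, [2, 3, 9, 3, 58, 2, 81, 16, 148]),
   (41, [2, 3, 9, 10, 246]), (43, [2, 3, 7, 86, 3, 2, 6]), (47, [2, 3, 7, 95, 3, 2, 6]),
   (49, [4, 3, 16, 4, 17, 99, 5]), (53, [4, 3, 32, 5, 57, 107, 9, 2, 24, 3, 4]), (59, [2, 5, 118]),
   (61, [2, 5, 123]), (67, [4, 3, 39, 33, 12, 50, 269, 2, 103, 4, 36, 2, 5]),
   (71, [4, 3, 27, 52, 142]), (73, [4, 3, 21, 5, 214, 7, 188, 35, 147]), (79, [4, 3, 15, 5, 3951]),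
   (83, [2, 7, 24, 41, 167, 2, 18, 7, 2]), (89, [2, 7, 178]),
   (97, [2, 7, 29, 46, 19, 36, 31, 84, 194]), (101, [2, 7, 19, 39, 14, 203, 2]),
   (103, [6, 3, 49, 30, 57, 77, 26, 4, 2472]), (107, [2, 9, 20, 5, 449, 26, 92, 51, 214]),
   (109, [4, 5, 36, 4, 4361]), (113, [2, 9, 36, 5, 227, 26, 64, 5, 4]),
   (127, [2, 9, 39, 10, 255, 12, 75, 5, 4]), (131, [4, 5, 49, 48, 524]),
   (137, [4, 5, 33, 79, 50, 101, 39, 17, 1096]), (139, [2, 9, 11, 5, 12233]), (149, [2, 11, 298]),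
   (151, [2, 11, 303]), (157, [2, 11, 45, 25, 51, 50, 75, 178, 315]),
   (163, [6, 5, 58, 47, 119, 41, 138, 12, 32, 326, 4]),
   (167, [6, 5, 78, 25, 183, 123, 45, 7, 4342]), (173, [4, 7, 96, 8, 346, 80, 148, 5, 6]),
   (179, [2, 13, 358]), (181, [2, 13, 363]), (191, [6, 5, 107, 14, 3820]),
   (193, [4, 7, 61, 42, 387, 24, 88, 4, 7]),
   (197, [6, 5, 71, 56, 145, 36, 789, 9, 141, 56, 71, 5, 6]), (199, [2, 15, 36, 398, 43, 7, 4]),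
   (211, [2, 15, 423]), (223, [2, 15, 35, 97, 43, 7, 2995, 447, 43, 33, 82, 126, 26, 17, 2]),
   (227, [4, 9, 72, 15, 579, 454, 25, 198, 71, 8, 5]), (229, [4, 9, 82, 24, 3207]),
   (233, [2, 17, 64, 12, 466, 54, 66, 17, 2]), (239, [2, 17, 478]), (241, [2, 17, 483]),
   (251, [4, 9, 93, 46, 2008]), (257, [2, 19, 40, 75, 141, 189, 71, 11, 6168]),
   (263, [6, 7, 226, 527, 10, 14, 3]), (269, [2, 19, 538]), (271, [2, 19, 543]),
   (277, [6, 7, 237, 27, 258, 7, 1452, 13, 11081]), (281, [6, 7, 159, 8, 505, 272, 103, 207, 563]),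
   (283, [2, 19, 45, 82, 153, 17, 1048, 12, 6226]), (293, [2, 21, 84, 137, 55, 54, 139, 332, 586])]

def tab31 : List (ℕ × List ℕ) :=
  [(8, [14, 33, 3, 2, 3, 2, 9, 8, 2, 3, 2, 5, 3, 8, 2, 2, 3, 2, 3, 2, 3, 2, 3, 2, 3, 2, 3, 2, 3, 2, 3, 2, 44724435, 32, 5, 5, 2, 33, 2])]

def table : List (ℕ × List (ℕ × List ℕ)) :=
  [(1, tab1), (2, tab2), (3, tab3), (4, tab4), (5, tab5), (6, tab6), (7, tab7), (8, tab8), (9, tab9), (10, tab10), (11, tab11), (12, tab12), (13, tab13), (14, tab14), (15, tab15), (16, tab16), (17, tab17), (18, tab18), (19, tab19), (20, tab20), (21, tab21), (22, tab22), (23, tab23), (24, tab24), (25, tab25), (26, tab26), (27, tab27), (28, tab28), (29, tab29), (30, tab30), (31, tab31)]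

theorem table_ok : table.all chkRow = true := by decide +kernel

theorem table_fst : table.map Prod.fst = List.range' 1 31 := by decide +kernel

theorem main (s r : ℕ) (hs : 0 < s) (hr : 0 < r) (h4 : s < 4 * r) (hg : Nat.gcd s r = 1)
    (hc : r ≤ 8 ∨ (s ≤ 30 ∧ r ≤ 10 * s)) : IsRelationNumber ((s : ℂ) / (r : ℂ)) := by
  have hmem : s ∈ table.map Prod.fst := by
    rw [table_fst, List.mem_range'_1]; omega
  obtain ⟨⟨s', L⟩, hp, rfl⟩ := List.mem_map.1 hmem
  have h := List.all_eq_true.1 table_ok _ hp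
  rw [chkRow, Bool.and_eq_true] at h
  obtain ⟨e, he, hd⟩ := cover_spec _ _ _ h.2 r hr (by omega) hg h4 hc
  exact rel_of_chk _ e (List.all_eq_true.1 h.1 e he) r hr hd

end RelNum

theorem stmt18 (s r : ℕ) (hs : 0 < s) (hr : 0 < r) (h4 : (s : ℚ) / (r : ℚ) < 4)
    (hgcd : Nat.gcd s r = 1) :
    (r ≤ 8 → IsRelationNumber ((s : ℂ) / (r : ℂ))) ∧
      (s ≤ 30 → (1 : ℚ) / 10 ≤ (s : ℚ) / (r : ℚ) →
        IsRelationNumber ((s : ℂ) / (r : ℂ))) := by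
  have hr' : (0 : ℚ) < r := by exact_mod_cast hr
  have h4' : s < 4 * r := by
    rw [div_lt_iff₀ hr'] at h4
    exact_mod_cast h4
  refine ⟨fun h => RelNum.main s r hs hr h4' hgcd (Or.inl h), fun h h10 => ?_⟩
  refine RelNum.main s r hs hr h4' hgcd (Or.inr ⟨h, ?_⟩)
  rw [div_le_div_iff₀ (by norm_num) hr'] at h10
  have : (r : ℚ) ≤ ((10 * s : ℕ) : ℚ) := by push_cast; linarith
  exact_mod_cast this
end
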